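/- Assume 0 < σ < ∞ if N ≤ 4 and 0 < σ < 4/(N-4) if N ≥ 5. Then for every c > 0 one has t(c) > 0 and the minimization problem (T_c) admits a solution. Moreover, for any sequence (u_n) ⊂ H²(ℝ^N) satisfying ∫|u_n|^{2σ+2}dx → 1 and T_c(u_n) → t(c), there exist a subsequence (u_{n_k}), a sequence (x_k) ⊂ ℝ^N, and a minimizer u for (T_c) such that u_{n_k}(·+x_k) → u strongly in H²(ℝ^N). -/

import Mathlib

open MeasureTheory Filter Topology

noncomputable section

abbrev Esp (N : ℕ) := EuclideanSpace ℝ (Fin N)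

/-- Smooth compactly supported test functions. -/
def TestFun {N : ℕ} (φ : Esp N → ℂ) : Prop :=
  ContDiff ℝ (⊤ : ℕ∞) φ ∧ HasCompactSupport φ

/-- Partial derivative in the `i`-th coordinate direction. -/
def pderivC {N : ℕ} (i : Fin N) (φ : Esp N → ℂ) : Esp N → ℂ :=
  fun x => fderiv ℝ φ x (EuclideanSpace.single i (1 : ℝ))

/-- The Laplacian of a (smooth) function. -/
def lapC {N : ℕ} (φ : Esp N → ℂ) : Esp N → ℂ :=
  fun x => ∑ i, pderivC i (pderivC i φ) x

/-- `v` is the weak `i`-th partial derivative of `u`. -/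
def IsWeakPDeriv {N : ℕ} (u : Esp N → ℂ) (i : Fin N) (v : Esp N → ℂ) : Prop :=
  ∀ φ : Esp N → ℂ, TestFun φ → ∫ x, u x * pderivC i φ x = - ∫ x, v x * φ x

/-- `v` is the weak Laplacian of `u`. -/
def IsWeakLap {N : ℕ} (u v : Esp N → ℂ) : Prop :=
  ∀ φ : Esp N → ℂ, TestFun φ → ∫ x, u x * lapC φ x = ∫ x, v x * φ x

/-- An element of the Sobolev space `H²(ℝ^N, ℂ)`: an `L²` function together with its
weak partial derivatives and its weak Laplacian, all in `L²`. -/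
structure H2 (N : ℕ) where
  u : Esp N → ℂ
  grad : Fin N → Esp N → ℂ
  lapl : Esp N → ℂ
  u_mem : MemLp u 2 (volume : Measure (Esp N))
  grad_mem : ∀ i, MemLp (grad i) 2 (volume : Measure (Esp N))
  lapl_mem : MemLp lapl 2 (volume : Measure (Esp N))
  grad_spec : ∀ i, IsWeakPDeriv u i (grad i)
  lapl_spec : IsWeakLap u lapl

namespace H2

variable {N : ℕ}

/-- `∫ |u|²`. -/
def massSq (U : H2 N) : ℝ := ∫ x, ‖U.u x‖ ^ 2

/-- `∫ |∇u|²`. -/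
def gradSq (U : H2 N) : ℝ := ∑ i, ∫ x, ‖U.grad i x‖ ^ 2

/-- `∫ |Δu|²`. -/
def lapSq (U : H2 N) : ℝ := ∫ x, ‖U.lapl x‖ ^ 2

/-- `∫ |u|^{2σ+2}`. -/
def pPow (σ : ℝ) (U : H2 N) : ℝ := ∫ x, ‖U.u x‖ ^ (2 * σ + 2)

/-- The energy `E(u) = ∫|Δu|² - 2∫|∇u|² - (1/(σ+1))∫|u|^{2σ+2}`. -/
def energy (σ : ℝ) (U : H2 N) : ℝ :=
  U.lapSq - 2 * U.gradSq - (1 / (σ + 1)) * U.pPow σ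

/-- The square of the `H²` norm. -/
def h2NormSq (U : H2 N) : ℝ := U.massSq + U.gradSq + U.lapSq

/-- `u` does not vanish almost everywhere. -/
def Nontriv (U : H2 N) : Prop := ¬ (U.u =ᵐ[(volume : Measure (Esp N))] 0)

end H2

/-- `E_min(m) = inf {E(u) : u ∈ H², ∫|u|² = m}`, with values in `EReal`. -/
def EminE (N : ℕ) (σ m : ℝ) : EReal :=
  ⨅ (U : H2 N) (_ : U.massSq = m), ((U.energy σ : ℝ) : EReal)

/-- The `L^p` norm (as a real number) of a function on `ℝ^N`. -/
def rLp {N : ℕ} (p : ℝ) (f : Esp N → ℂ) : ℝ :=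
  (eLpNorm f (ENNReal.ofReal p) (volume : Measure (Esp N))).toReal


/-- The best constant `B(N,σ)` in the Gagliardo–Nirenberg–Sobolev inequality
`‖u‖_{L^{2σ+2}}^{2σ+2} ≤ B ‖Δu‖_{L²}^{Nσ/2} ‖u‖_{L²}^{2+2σ-Nσ/2}`. -/
def GNconst (N : ℕ) (σ : ℝ) : ℝ :=
  sSup {r : ℝ | ∃ U : H2 N, U.Nontriv ∧
    r = U.pPow σ /
      (rLp 2 U.lapl ^ ((N : ℝ) * σ / 2) * rLp 2 U.u ^ (2 + 2 * σ - (N : ℝ) * σ / 2))}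

/-- `k* = (σ+1)^{1/σ} B(N,σ)^{-1/σ}`. -/
def kstar (N : ℕ) (σ : ℝ) : ℝ := (σ + 1) ^ (1 / σ) * GNconst N σ ^ (-(1 / σ))

/-- Strong `H²` convergence of `v k (· + xs k)` to `U`. -/
def H2TendstoTrans {N : ℕ} (v : ℕ → H2 N) (xs : ℕ → Esp N) (U : H2 N) : Prop :=
  Tendsto (fun k => eLpNorm (fun x => (v k).u (x + xs k) - U.u x) 2
      (volume : Measure (Esp N))) atTop (nhds 0) ∧
  (∀ i, Tendsto (fun k => eLpNorm (fun x => (v k).grad i (x + xs k) - U.grad i x) 2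
      (volume : Measure (Esp N))) atTop (nhds 0)) ∧
  Tendsto (fun k => eLpNorm (fun x => (v k).lapl (x + xs k) - U.lapl x) 2
      (volume : Measure (Esp N))) atTop (nhds 0)

/-- `u` is a weak (`H^{-2}`) solution of `Δ²u + 2Δu + (1+c)u - |u|^{2σ}u = 0`. -/
def SolvesSW {N : ℕ} (σ c : ℝ) (U : H2 N) : Prop :=
  ∀ φ : Esp N → ℂ, TestFun φ →
    (∫ x, U.lapl x * lapC φ x) + 2 * (∫ x, U.lapl x * φ x) +
        ((1 + c : ℝ) : ℂ) * (∫ x, U.u x * φ x) -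
        (∫ x, ((‖U.u x‖ ^ (2 * σ) : ℝ) : ℂ) * U.u x * φ x) = 0

/-- `T_c(u) = ∫|Δu|² - 2∫|∇u|² + (1+c)∫|u|²`. -/
def Tfun {N : ℕ} (c : ℝ) (U : H2 N) : ℝ := U.lapSq - 2 * U.gradSq + (1 + c) * U.massSq

/-- `t(c) = inf {T_c(u) : ∫|u|^{2σ+2} = 1}`. -/
def tmin (N : ℕ) (σ c : ℝ) : ℝ := sInf {r : ℝ | ∃ U : H2 N, U.pPow σ = 1 ∧ r = Tfun c U}

/-- The action `S_c(u) = E(u) + (1+c)‖u‖_{L²}² = T_c(u) - (1/(σ+1))∫|u|^{2σ+2}`. -/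
def action {N : ℕ} (σ c : ℝ) (U : H2 N) : ℝ := U.energy σ + (1 + c) * U.massSq

/-!
A minimizing sequence is bounded in `H²`, because integration by parts gives
`T_c(u) = ‖Δu + u‖² + c ‖u‖²`. Subcriticality enters through a dyadic decomposition in frequency:
the part of `u` at frequencies above `2 ^ K` is small in `L^(2σ+2)`, uniformly on bounded sets of
`H²`. So if `‖u‖_{2σ+2}` stays away from `0`, then so does the sup norm of the low-frequency part
of `u`, which is evaluated by continuous linear functionals; translating a point where it is large
to the origin produces a nonzero weak limit `V`.

It remains to exclude splitting. Along a subsequence converging almost everywhere, the Brezis–Lieb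
lemma and the Hilbert space structure split both the constraint and `T_c` between `V` and the
remainder. With `a = ∫ |V|^(2σ+2)`, homogeneity gives
`t(c) (a ^ (1/(σ+1)) + (1 - a) ^ (1/(σ+1))) ≤ t(c)`, so strict concavity forces `a = 1`. Then `V` is
a minimizer, and `T_c`, hence the `H²` norm, of the remainder tends to `0`.
-/

open scoped SchwartzMap ENNReal FourierTransform LineDeriv Laplacian

local notation "L²(" E ", " F ")" => Lp F 2 (volume : Measure E)

section Density

variable {E F : Type*} [NormedAddCommGroup E] [InnerProductSpace ℝ E] [FiniteDimensional ℝ E]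
  [NormedAddCommGroup F] [NormedSpace ℝ F]

lemma iteratedFDeriv_one_sub_bump_zero (χ : ContDiffBump (0 : E)) (k : ℕ) :
    iteratedFDeriv ℝ k (fun x => 1 - χ x) 0 = 0 := by
  have h : (fun x => 1 - χ x) =ᶠ[𝓝 0] fun _ => 0 := by
    filter_upwards [χ.eventuallyEq_one] with x hx using by simp [hx]
  rw [(h.iteratedFDeriv ℝ k).eq_of_nhds, iteratedFDeriv_fun_zero, Pi.zero_apply]

lemma hasCompactSupport_iteratedFDeriv_succ_one_sub_bump (χ : ContDiffBump (0 : E)) (k : ℕ) :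
    HasCompactSupport (iteratedFDeriv ℝ (k + 1) fun x => 1 - χ x) := by
  refine HasCompactSupport.intro χ.hasCompactSupport fun x hx => ?_
  have h : (fun x => 1 - χ x) =ᶠ[𝓝 x] fun _ => 1 := by
    filter_upwards [notMem_tsupport_iff_eventuallyEq.1 hx] with y hy using by simp [hy]
  rw [(h.iteratedFDeriv ℝ (k + 1)).eq_of_nhds, iteratedFDeriv_succ_const, Pi.zero_apply]

lemma exists_norm_iteratedFDeriv_one_sub_bump_le (χ : ContDiffBump (0 : E)) (k : ℕ) :
    ∃ C, 0 ≤ C ∧ ∀ x, ‖iteratedFDeriv ℝ k (fun x => 1 - χ x) x‖ ≤ C * ‖x‖ := by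
  have hχ : ContDiff ℝ (⊤ : ℕ∞) fun x => 1 - χ x := contDiff_const.sub χ.contDiff
  obtain ⟨C, hC⟩ :=
    (hasCompactSupport_iteratedFDeriv_succ_one_sub_bump χ k).exists_bound_of_continuous
      (hχ.continuous_iteratedFDeriv (mod_cast le_top))
  refine ⟨C, (norm_nonneg _).trans (hC 0), fun x => ?_⟩
  have h := Convex.norm_image_sub_le_of_norm_fderiv_le (𝕜 := ℝ) (s := Set.univ) (x := 0) (y := x)
    (fun y _ => hχ.differentiable_iteratedFDeriv (m := k) (mod_cast ENat.natCast_lt_top k) y)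
    (fun y _ => by rw [norm_fderiv_iteratedFDeriv]; exact hC y) convex_univ trivial trivial
  rwa [iteratedFDeriv_one_sub_bump_zero, sub_zero, sub_zero] at h

lemma exists_norm_iteratedFDeriv_one_sub_bump_comp_smul_le (χ : ContDiffBump (0 : E)) (k : ℕ) :
    ∃ C, 0 ≤ C ∧ ∀ t ∈ Set.Ioc (0 : ℝ) 1, ∀ x,
      ‖iteratedFDeriv ℝ k (fun x => 1 - χ (t • x)) x‖ ≤ C * (t * ‖x‖) := by
  obtain ⟨C, hC0, hC⟩ := exists_norm_iteratedFDeriv_one_sub_bump_le χ k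
  refine ⟨C, hC0, fun t ⟨ht0, ht1⟩ x => ?_⟩
  have hχ : ContDiff ℝ k fun x => 1 - χ x := contDiff_const.sub χ.contDiff
  rw [iteratedFDeriv_comp_const_smul t hχ, norm_smul, norm_pow, Real.norm_of_nonneg ht0.le]
  calc t ^ k * ‖iteratedFDeriv ℝ k (fun x => 1 - χ x) (t • x)‖
      ≤ 1 * (C * ‖t • x‖) :=
        mul_le_mul (pow_le_one₀ ht0.le ht1) (hC _) (norm_nonneg _) zero_le_one
    _ = C * (t * ‖x‖) := by rw [norm_smul, Real.norm_of_nonneg ht0.le, one_mul]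

/-- The smooth truncation `x ↦ χ(t x) φ(x)` of a Schwartz function `φ` by a dilated bump function,
as a Schwartz function. -/
def bumpCutoff (χ : ContDiffBump (0 : E)) (φ : 𝓢(E, F)) (t : ℝ) (ht : t ≠ 0) : 𝓢(E, F) :=
  ((χ.hasCompactSupport.comp_smul ht).smul_right (f' := φ)).toSchwartzMap
    ((χ.contDiff.comp (contDiff_const_smul t)).smul (φ.smooth _))

lemma exists_seminorm_sub_bumpCutoff_le (χ : ContDiffBump (0 : E)) (φ : 𝓢(E, F)) (k n : ℕ) :
    ∃ C, ∀ t (ht : t ∈ Set.Ioc (0 : ℝ) 1),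
      SchwartzMap.seminorm ℝ k n (φ - bumpCutoff χ φ t ht.1.ne') ≤ C * t := by
  choose C hC0 hC using exists_norm_iteratedFDeriv_one_sub_bump_comp_smul_le χ
  refine ⟨∑ j ∈ Finset.range (n + 1),
    n.choose j * C j * SchwartzMap.seminorm ℝ (k + 1) (n - j) φ, fun t ht => ?_⟩
  have hχ : ContDiff ℝ n fun x => 1 - χ (t • x) :=
    contDiff_const.sub (χ.contDiff.comp (contDiff_const_smul t))
  have hC' : 0 ≤ ∑ j ∈ Finset.range (n + 1),
      n.choose j * C j * SchwartzMap.seminorm ℝ (k + 1) (n - j) φ :=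
    Finset.sum_nonneg fun j _ => mul_nonneg (mul_nonneg (Nat.cast_nonneg _) (hC0 j))
      (apply_nonneg _ _)
  refine SchwartzMap.seminorm_le_bound ℝ k n _ (mul_nonneg hC' ht.1.le) fun x => ?_
  have hsub : ⇑(φ - bumpCutoff χ φ t ht.1.ne') = fun x => (1 - χ (t • x)) • φ x := by
    ext x
    simp [bumpCutoff, sub_smul]
  rw [hsub, Finset.sum_mul]
  refine (mul_le_mul_of_nonneg_left
    (norm_iteratedFDeriv_smul_le hχ (φ.smooth n) x le_rfl) (by positivity)).trans ?_
  rw [Finset.mul_sum]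
  refine Finset.sum_le_sum fun j _ => ?_
  calc ‖x‖ ^ k * (n.choose j * ‖iteratedFDeriv ℝ j (fun x => 1 - χ (t • x)) x‖ *
        ‖iteratedFDeriv ℝ (n - j) φ x‖)
      ≤ ‖x‖ ^ k * (n.choose j * (C j * (t * ‖x‖)) * ‖iteratedFDeriv ℝ (n - j) φ x‖) := by
        gcongr
        exact hC j t ht x
    _ = n.choose j * C j * (‖x‖ ^ (k + 1) * ‖iteratedFDeriv ℝ (n - j) φ x‖) * t := by ring
    _ ≤ _ := by
        have := hC0 j
        have := ht.1.le
        gcongr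
        exact φ.le_seminorm ℝ (k + 1) (n - j) x

lemma tendsto_bumpCutoff (χ : ContDiffBump (0 : E)) (φ : 𝓢(E, F)) :
    Tendsto (fun n : ℕ => bumpCutoff χ φ ((n : ℝ) + 1)⁻¹ (by positivity)) atTop (𝓝 φ) := by
  rw [(schwartz_withSeminorms ℝ E F).tendsto_nhds _ _]
  rintro ⟨k, m⟩ ε hε
  obtain ⟨C, hC⟩ := exists_seminorm_sub_bumpCutoff_le χ φ k m
  have hlim : Tendsto (fun n : ℕ => C * ((n : ℝ) + 1)⁻¹) atTop (𝓝 0) := by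
    simpa [one_div] using (tendsto_one_div_add_atTop_nhds_zero_nat (𝕜 := ℝ)).const_mul C
  filter_upwards [hlim.eventually (gt_mem_nhds hε)] with n hn
  rw [SchwartzMap.schwartzSeminormFamily_apply, map_sub_rev]
  exact (hC _ ⟨by positivity, inv_le_one_of_one_le₀ (by simp)⟩).trans_lt hn

theorem dense_setOf_hasCompactSupport_schwartzMap :
    Dense {φ : 𝓢(E, F) | HasCompactSupport φ} := fun φ =>
  let χ : ContDiffBump (0 : E) := ⟨1, 2, one_pos, one_lt_two⟩
  mem_closure_of_tendsto (tendsto_bumpCutoff χ φ) <| .of_forall fun n =>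
    (χ.hasCompactSupport.comp_smul (by positivity)).smul_right

end Density

lemma locallyIntegrable_Lp_two {α G : Type*} [TopologicalSpace α] [MeasurableSpace α]
    {μ : Measure α} [IsLocallyFiniteMeasure μ] [NormedAddCommGroup G] (f : Lp G 2 μ) :
    LocallyIntegrable f μ :=
  (Lp.memLp f).locallyIntegrable one_le_two

section Multiplier

variable {E F : Type*} [NormedAddCommGroup E] [InnerProductSpace ℝ E] [FiniteDimensional ℝ E]
  [MeasurableSpace E] [BorelSpace E]
  [NormedAddCommGroup F] [InnerProductSpace ℂ F] [CompleteSpace F]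

lemma ae_eq_of_forall_integral_schwartzMap_smul_eq {f g : E → F}
    (hf : LocallyIntegrable f volume) (hg : LocallyIntegrable g volume)
    (h : ∀ φ : 𝓢(E, ℂ), HasCompactSupport φ → ∫ x, φ x • f x = ∫ x, φ x • g x) :
    f =ᵐ[volume] g := by
  refine ae_eq_of_integral_contDiff_smul_eq hf hg fun φ hφ hc => ?_
  have hc' : HasCompactSupport (Complex.ofRealCLM ∘ φ) := hc.comp_left rfl
  simpa using h (hc'.toSchwartzMap (Complex.ofRealCLM.contDiff.comp hφ)) hc'

theorem ae_eq_smul_of_smulLeftCLM_eq {f g : L²(E, F)} {m : E → ℂ}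
    (hm : m.HasTemperateGrowth)
    (h : TemperedDistribution.smulLeftCLM F m (f : 𝓢'(E, F)) = (g : 𝓢'(E, F))) :
    g =ᵐ[volume] fun x => m x • f x := by
  refine ae_eq_of_forall_integral_schwartzMap_smul_eq (locallyIntegrable_Lp_two g) ?_
    fun φ _ => ?_
  · exact locallyIntegrableOn_univ.1 <| ((locallyIntegrable_Lp_two f).locallyIntegrableOn Set.univ)
      |>.continuousOn_smul isOpen_univ.isLocallyClosed hm.1.continuous.continuousOn
  · have := congrArg (fun T : 𝓢'(E, F) => T φ) h
    simp only [TemperedDistribution.smulLeftCLM_apply_apply, Lp.toTemperedDistribution_apply,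
      SchwartzMap.smulLeftCLM_apply_apply hm, smul_eq_mul, mul_comm (m _), mul_smul] at this
    exact this.symm

theorem fourier_ae_eq_of_fourierMultiplierCLM_eq {f g : L²(E, F)} {m : E → ℂ}
    (hm : m.HasTemperateGrowth)
    (h : TemperedDistribution.fourierMultiplierCLM F m (f : 𝓢'(E, F)) = (g : 𝓢'(E, F))) :
    (𝓕 g : L²(E, F)) =ᵐ[volume]
      fun ξ => m ξ • (𝓕 f : L²(E, F)) ξ := by
  refine ae_eq_smul_of_smulLeftCLM_eq hm ?_
  rw [← Lp.fourier_toTemperedDistribution_eq, ← Lp.fourier_toTemperedDistribution_eq, ← h,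
    TemperedDistribution.fourierMultiplierCLM_apply, FourierTransform.fourier_fourierInv_eq]

theorem fourier_ae_eq_of_lineDerivOp_eq {f g : L²(E, F)} {v : E}
    (h : ∂_{v} (f : 𝓢'(E, F)) = (g : 𝓢'(E, F))) :
    (𝓕 g : L²(E, F)) =ᵐ[volume] fun ξ =>
      (2 * Real.pi * Complex.I * (inner ℝ ξ v : ℝ)) • (𝓕 f : L²(E, F)) ξ := by
  refine fourier_ae_eq_of_fourierMultiplierCLM_eq (by fun_prop) ?_
  rw [← h, TemperedDistribution.lineDeriv_eq_fourierMultiplierCLM, ←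
    smul_apply, ← TemperedDistribution.fourierMultiplierCLM_smul (by fun_prop)]
  rfl

theorem fourier_ae_eq_of_laplacian_eq {f g : L²(E, F)}
    (h : Δ (f : 𝓢'(E, F)) = (g : 𝓢'(E, F))) :
    (𝓕 g : L²(E, F)) =ᵐ[volume] fun ξ =>
      (-(2 * Real.pi * ‖ξ‖) ^ 2) • (𝓕 f : L²(E, F)) ξ := by
  have hm : (fun ξ : E => ((‖ξ‖ ^ 2 : ℝ) : ℂ)).HasTemperateGrowth := by fun_prop
  have := fourier_ae_eq_of_fourierMultiplierCLM_eq
    (m := (-(2 * Real.pi) ^ 2 : ℂ) • fun ξ => ((‖ξ‖ ^ 2 : ℝ) : ℂ)) (f := f) (g := g)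
    (by fun_prop) (by
      rw [← h, TemperedDistribution.laplacian_eq_fourierMultiplierCLM,
        TemperedDistribution.fourierMultiplierCLM_smul hm, ← Complex.coe_smul (-(2 * _) ^ 2)]
      simp)
  filter_upwards [this] with ξ hξ
  rw [hξ, ← Complex.coe_smul]
  congr 1
  simp
  ring

end Multiplier

section WeakDerivatives

variable {N : ℕ} {u v : Esp N → ℂ}

lemma pderivC_coe (i : Fin N) (φ : 𝓢(Esp N, ℂ)) :
    pderivC i φ = (∂_{EuclideanSpace.single i (1 : ℝ)} φ : 𝓢(Esp N, ℂ)) := by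
  funext x
  rw [pderivC, SchwartzMap.lineDerivOp_apply, φ.differentiableAt.lineDeriv_eq_fderiv]

lemma lapC_coe (φ : 𝓢(Esp N, ℂ)) : lapC φ = (Δ φ : 𝓢(Esp N, ℂ)) := by
  funext x
  rw [SchwartzMap.laplacian_eq_sum (EuclideanSpace.basisFun (Fin N) ℝ), sum_apply]
  simp only [lapC, pderivC_coe, EuclideanSpace.basisFun_apply]

lemma toTemperedDistribution_ext_of_testFun {S T : 𝓢'(Esp N, ℂ)}
    (h : ∀ φ : 𝓢(Esp N, ℂ), TestFun φ → S φ = T φ) : S = T :=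
  DFunLike.coe_injective <| (map_continuous S).ext_on dense_setOf_hasCompactSupport_schwartzMap
    (map_continuous T) fun φ hφ => h φ ⟨φ.smooth _, hφ⟩

lemma toTemperedDistribution_toLp_apply (hu : MemLp u 2 volume) (φ : 𝓢(Esp N, ℂ)) :
    (hu.toLp u : 𝓢'(Esp N, ℂ)) φ = ∫ x, u x * φ x := by
  rw [Lp.toTemperedDistribution_apply]
  refine integral_congr_ae ?_
  filter_upwards [hu.coeFn_toLp] with x hx
  rw [hx, smul_eq_mul, mul_comm]

lemma isWeakPDeriv_iff {i : Fin N} (hu : MemLp u 2 volume) (hv : MemLp v 2 volume) :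
    IsWeakPDeriv u i v ↔
      ∂_{EuclideanSpace.single i (1 : ℝ)} (hu.toLp u : 𝓢'(Esp N, ℂ)) =
        (hv.toLp v : 𝓢'(Esp N, ℂ)) := by
  have key (φ : 𝓢(Esp N, ℂ)) :
      (∂_{EuclideanSpace.single i (1 : ℝ)} (hu.toLp u : 𝓢'(Esp N, ℂ)) : 𝓢'(Esp N, ℂ)) φ =
        (hv.toLp v : 𝓢'(Esp N, ℂ)) φ ↔
      ∫ x, u x * pderivC i φ x = -∫ x, v x * φ x := by
    rw [TemperedDistribution.lineDerivOp_apply_apply, map_neg, toTemperedDistribution_toLp_apply,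
      toTemperedDistribution_toLp_apply, ← pderivC_coe, neg_eq_iff_eq_neg]
  exact ⟨fun h => toTemperedDistribution_ext_of_testFun fun φ hφ => (key φ).2 (h φ hφ),
    fun h φ hφ => (key (hφ.2.toSchwartzMap hφ.1)).1 (by rw [h])⟩

lemma isWeakLap_iff (hu : MemLp u 2 volume) (hv : MemLp v 2 volume) :
    IsWeakLap u v ↔ Δ (hu.toLp u : 𝓢'(Esp N, ℂ)) = (hv.toLp v : 𝓢'(Esp N, ℂ)) := by
  have key (φ : 𝓢(Esp N, ℂ)) :
      (Δ (hu.toLp u : 𝓢'(Esp N, ℂ)) : 𝓢'(Esp N, ℂ)) φ = (hv.toLp v : 𝓢'(Esp N, ℂ)) φ ↔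
      ∫ x, u x * lapC φ x = ∫ x, v x * φ x := by
    rw [TemperedDistribution.laplacian_apply_apply, toTemperedDistribution_toLp_apply,
      toTemperedDistribution_toLp_apply, ← lapC_coe]
  exact ⟨fun h => toTemperedDistribution_ext_of_testFun fun φ hφ => (key φ).2 (h φ hφ),
    fun h φ hφ => (key (hφ.2.toSchwartzMap hφ.1)).1 (by rw [h])⟩

end WeakDerivatives

section Interpolation

theorem eLpNorm_le_rpow_mul_eLpNorm_rpow_of_enorm_le {α G : Type*} {m : MeasurableSpace α}
    {μ : Measure α} [NormedAddCommGroup G] {g : α → G} {p q : ℝ} (hq : 0 < q) (hqp : q ≤ p)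
    {M : ℝ≥0∞} (hM : M ≠ ∞) (hgM : ∀ᵐ x ∂μ, ‖g x‖ₑ ≤ M) :
    eLpNorm g (ENNReal.ofReal p) μ ≤
      M ^ (1 - q / p) * eLpNorm g (ENNReal.ofReal q) μ ^ (q / p) := by
  have hp : 0 < p := hq.trans_le hqp
  have hpq : 0 ≤ p - q := sub_nonneg.2 hqp
  have key : ∫⁻ x, ‖g x‖ₑ ^ p ∂μ ≤ M ^ (p - q) * ∫⁻ x, ‖g x‖ₑ ^ q ∂μ := by
    rw [← lintegral_const_mul' _ _ (ENNReal.rpow_ne_top_of_nonneg hpq hM)]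
    refine lintegral_mono_ae (hgM.mono fun x hx => ?_)
    calc ‖g x‖ₑ ^ p = ‖g x‖ₑ ^ (p - q) * ‖g x‖ₑ ^ q := by
          rw [← ENNReal.rpow_add_of_nonneg _ _ hpq hq.le, sub_add_cancel]
      _ ≤ M ^ (p - q) * ‖g x‖ₑ ^ q := by gcongr
  rw [eLpNorm_eq_lintegral_rpow_enorm_toReal (by simpa using hp) (by simp),
    eLpNorm_eq_lintegral_rpow_enorm_toReal (by simpa using hq) (by simp),
    ENNReal.toReal_ofReal hp.le, ENNReal.toReal_ofReal hq.le, ← ENNReal.rpow_mul]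
  calc (∫⁻ x, ‖g x‖ₑ ^ p ∂μ) ^ (1 / p)
      ≤ (M ^ (p - q) * ∫⁻ x, ‖g x‖ₑ ^ q ∂μ) ^ (1 / p) := by gcongr
    _ = M ^ (1 - q / p) * (∫⁻ x, ‖g x‖ₑ ^ q ∂μ) ^ (1 / q * (q / p)) := by
        rw [ENNReal.mul_rpow_of_nonneg _ _ (by positivity), ← ENNReal.rpow_mul]
        congr 2 <;> field_simp

end Interpolation

lemma integrable_indicator_Lp_two {α G : Type*} {m : MeasurableSpace α} {μ : Measure α}
    [NormedAddCommGroup G] (f : Lp G 2 μ) {S : Set α} (hS : MeasurableSet S) (hSfin : μ S ≠ ∞) :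
    Integrable (S.indicator f) μ := by
  have : IsFiniteMeasure (μ.restrict S) := ⟨by simpa using hSfin.lt_top⟩
  exact (integrable_indicator_iff hS).2 (((Lp.memLp f).restrict S).integrable one_le_two)

section BandLimit

variable {E F : Type*} [NormedAddCommGroup E] [InnerProductSpace ℝ E] [FiniteDimensional ℝ E]
  [MeasurableSpace E] [BorelSpace E]
  [NormedAddCommGroup F] [InnerProductSpace ℂ F]

lemma continuous_fourierInv_of_integrable {f : E → F} (hf : Integrable f volume) :
    Continuous (𝓕⁻ f) :=
  VectorFourier.fourierIntegral_continuous (L := -innerₗ E) Real.continuous_fourierChar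
    (by simp only [LinearMap.neg_apply, innerₗ_apply_apply]; fun_prop) hf

variable [CompleteSpace F]

lemma integral_smul_fourier_Lp (f : L²(E, F)) (φ : 𝓢(E, ℂ)) :
    ∫ ξ, φ ξ • (𝓕 f : L²(E, F)) ξ = ∫ x, (𝓕 φ : 𝓢(E, ℂ)) x • f x := by
  have h := congrArg (fun T : 𝓢'(E, F) => T φ) (Lp.fourier_toTemperedDistribution_eq f)
  simp only [TemperedDistribution.fourier_apply, Lp.toTemperedDistribution_apply] at h
  exact h.symm

lemma norm_fourierInv_Lp (f : L²(E, F)) :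
    ‖(𝓕⁻ f : L²(E, F))‖ = ‖f‖ := by
  rw [← Lp.norm_fourier_eq, FourierTransform.fourier_fourierInv_eq]

lemma integral_smul_fourierInv {f : E → F} (hf : Integrable f volume) (φ : 𝓢(E, ℂ)) :
    ∫ x, φ x • 𝓕⁻ f x = ∫ ξ, (𝓕⁻ φ : 𝓢(E, ℂ)) ξ • f ξ := by
  have h := VectorFourier.integral_fourierIntegral_smul_eq_flip (L := -innerₗ E)
    Real.continuous_fourierChar
    (by simp only [LinearMap.neg_apply, innerₗ_apply_apply]; fun_prop)
    (φ.integrable (μ := volume)) hf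
  have hflip : (-innerₗ E).flip = -innerₗ E := by
    ext x y
    simp [real_inner_comm]
  rw [hflip] at h
  rw [SchwartzMap.fourierInv_coe]
  exact h.symm

theorem fourierInv_toLp_ae_eq {f : E → F} (hf : Integrable f volume) (hf2 : MemLp f 2 volume) :
    (𝓕⁻ (hf2.toLp f) : L²(E, F)) =ᵐ[volume] 𝓕⁻ f := by
  refine ae_eq_of_forall_integral_schwartzMap_smul_eq (locallyIntegrable_Lp_two _)
    (continuous_fourierInv_of_integrable hf).locallyIntegrable fun φ _ => ?_
  have h := integral_smul_fourier_Lp (𝓕⁻ (hf2.toLp f) : L²(E, F)) (𝓕⁻ φ)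
  rw [FourierTransform.fourier_fourierInv_eq, FourierTransform.fourier_fourierInv_eq] at h
  rw [← h, integral_smul_fourierInv hf]
  refine integral_congr_ae ?_
  filter_upwards [hf2.coeFn_toLp] with x hx
  rw [hx]

/-- The frequency truncation `∫_S e^{2πi⟨ξ, x⟩} f̂(ξ) dξ` of `f ∈ L²`, as a genuine function. -/
def bandLimit (S : Set E) (f : L²(E, F)) : E → F :=
  𝓕⁻ (S.indicator (𝓕 f : L²(E, F)))

variable {S T : Set E} (f g : L²(E, F))

lemma continuous_bandLimit (hS : MeasurableSet S) (hSfin : volume S ≠ ∞) :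
    Continuous (bandLimit S f) :=
  continuous_fourierInv_of_integrable (integrable_indicator_Lp_two _ hS hSfin)

lemma fourierInv_toLp_indicator_ae_eq_bandLimit (hS : MeasurableSet S) (hSfin : volume S ≠ ∞) :
    (𝓕⁻ (((Lp.memLp (𝓕 f : L²(E, F))).indicator hS).toLp _) :
      L²(E, F)) =ᵐ[volume] bandLimit S f :=
  fourierInv_toLp_ae_eq (integrable_indicator_Lp_two _ hS hSfin) _

lemma enorm_bandLimit_le (hS : MeasurableSet S) (x : E) :
    ‖bandLimit S f x‖ₑ ≤ volume S ^ (1 / 2 : ℝ) *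
      eLpNorm (S.indicator (𝓕 f : L²(E, F))) 2 volume := by
  set h : L²(E, F) := 𝓕 f
  calc ‖bandLimit S f x‖ₑ ≤ ∫⁻ ξ, ‖S.indicator h ξ‖ₑ := by
        rw [bandLimit, Real.fourierInv_eq]
        refine (enorm_integral_le_lintegral_enorm _).trans_eq (lintegral_congr fun ξ => ?_)
        rw [← ofReal_norm, ← ofReal_norm, Circle.norm_smul]
    _ = eLpNorm h 1 (volume.restrict S) := by
        simp only [eLpNorm_one_eq_lintegral_enorm, enorm_indicator_eq_indicator_enorm,
          lintegral_indicator hS]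
    _ ≤ eLpNorm h 2 (volume.restrict S) * volume S ^ (1 / 2 : ℝ) := by
        convert eLpNorm_le_eLpNorm_mul_rpow_measure_univ one_le_two
          ((Lp.memLp h).restrict S).aestronglyMeasurable using 2
        norm_num
    _ = _ := by rw [eLpNorm_indicator_eq_eLpNorm_restrict hS, mul_comm]

lemma eLpNorm_two_bandLimit (hS : MeasurableSet S) (hSfin : volume S ≠ ∞) :
    eLpNorm (bandLimit S f) 2 volume =
      eLpNorm (S.indicator (𝓕 f : L²(E, F))) 2 volume := by
  rw [← eLpNorm_congr_ae (fourierInv_toLp_indicator_ae_eq_bandLimit f hS hSfin), ← Lp.enorm_def,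
    ← ofReal_norm, norm_fourierInv_Lp, ofReal_norm, Lp.enorm_def]
  exact eLpNorm_congr_ae (MemLp.coeFn_toLp _)

theorem eLpNorm_bandLimit_le (hS : MeasurableSet S) (hSfin : volume S ≠ ∞) {p : ℝ} (hp : 2 ≤ p) :
    eLpNorm (bandLimit S f) (ENNReal.ofReal p) volume ≤ volume S ^ (1 / 2 - 1 / p) *
      eLpNorm (S.indicator (𝓕 f : L²(E, F))) 2 volume := by
  set m := eLpNorm (S.indicator (𝓕 f : L²(E, F))) 2 volume
  have hm : m ≠ ∞ := ((Lp.memLp (𝓕 f : L²(E, F))).indicator hS).eLpNorm_ne_top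
  have hp' : 0 ≤ 1 - 2 / p := sub_nonneg.2 ((div_le_one (by linarith)).2 hp)
  have hM : volume S ^ (1 / 2 : ℝ) * m ≠ ∞ :=
    ENNReal.mul_ne_top (ENNReal.rpow_ne_top_of_nonneg (by norm_num) hSfin) hm
  calc eLpNorm (bandLimit S f) (ENNReal.ofReal p) volume
      ≤ (volume S ^ (1 / 2 : ℝ) * m) ^ (1 - 2 / p) * m ^ (2 / p) := by
        have := eLpNorm_le_rpow_mul_eLpNorm_rpow_of_enorm_le (μ := volume) two_pos hp hM
          (ae_of_all _ (enorm_bandLimit_le f hS))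
        rwa [ENNReal.ofReal_ofNat, eLpNorm_two_bandLimit f hS hSfin] at this
    _ = volume S ^ (1 / 2 - 1 / p) * m := by
        rw [ENNReal.mul_rpow_of_nonneg _ _ hp', ← ENNReal.rpow_mul, mul_assoc,
          ← ENNReal.rpow_add_of_nonneg _ _ hp' (by positivity)]
        ring_nf
        simp

lemma bandLimit_sub_ae (hS : MeasurableSet S) (hSfin : volume S ≠ ∞) :
    ⇑f - bandLimit S f =ᵐ[volume]
      (𝓕⁻ (((Lp.memLp (𝓕 f : L²(E, F))).indicator hS.compl).toLp _) :
        L²(E, F)) := by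
  set h : L²(E, F) := 𝓕 f
  have hsplit : f = 𝓕⁻ (((Lp.memLp h).indicator hS).toLp _) +
      (𝓕⁻ (((Lp.memLp h).indicator hS.compl).toLp _) : L²(E, F)) := by
    rw [← FourierTransform.fourierInv_add, ← MemLp.toLp_add]
    simp [Set.indicator_self_add_compl, h]
  filter_upwards [Lp.coeFn_add (𝓕⁻ (((Lp.memLp h).indicator hS).toLp _) : L²(E, F))
    (𝓕⁻ (((Lp.memLp h).indicator hS.compl).toLp _)),
    fourierInv_toLp_indicator_ae_eq_bandLimit f hS hSfin] with x h1 h2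
  rw [Pi.sub_apply, ← h2, sub_eq_iff_eq_add', ← Pi.add_apply, ← h1, ← hsplit]

theorem eLpNorm_two_sub_bandLimit (hS : MeasurableSet S) (hSfin : volume S ≠ ∞) :
    eLpNorm (⇑f - bandLimit S f) 2 volume =
      eLpNorm (Sᶜ.indicator (𝓕 f : L²(E, F))) 2 volume := by
  rw [eLpNorm_congr_ae (bandLimit_sub_ae f hS hSfin), ← Lp.enorm_def, ← ofReal_norm,
    norm_fourierInv_Lp, ofReal_norm, Lp.enorm_def]
  exact eLpNorm_congr_ae (MemLp.coeFn_toLp _)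

end BandLimit

section BandLimitEval

variable {E F : Type*} [NormedAddCommGroup E] [InnerProductSpace ℝ E] [FiniteDimensional ℝ E]
  [MeasurableSpace E] [BorelSpace E]
  [NormedAddCommGroup F] [InnerProductSpace ℂ F] {S : Set E}

/-- Translation `f ↦ f(· + y)` on `L²`. -/
def translateL2 (y : E) : L²(E, F) →ₗᵢ[ℂ] L²(E, F) :=
  Lp.compMeasurePreservingₗᵢ ℂ (· + y) (measurePreserving_add_right volume y)

lemma translateL2_ae_eq (y : E) (f : L²(E, F)) :
    translateL2 y f =ᵐ[volume] fun x => f (x + y) :=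
  Lp.coeFn_compMeasurePreserving f (measurePreserving_add_right volume y)

lemma integrableOn_fourierChar_smul (hS : MeasurableSet S) (hSfin : volume S ≠ ∞) (f : L²(E, F))
    (x : E) : IntegrableOn (fun ξ => Real.fourierChar (inner ℝ ξ x) • f ξ) S volume := by
  have hf : Integrable f (volume.restrict S) :=
    (integrable_indicator_iff hS).1 (integrable_indicator_Lp_two f hS hSfin)
  simpa [IntegrableOn] using (VectorFourier.fourierIntegral_convergent_iff (L := -innerₗ E)
    Real.continuous_fourierChar
    (by simp only [LinearMap.neg_apply, innerₗ_apply_apply]; fun_prop) x).2 hf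

variable [CompleteSpace F]

lemma bandLimit_apply (hS : MeasurableSet S) (f : L²(E, F)) (x : E) :
    bandLimit S f x = ∫ ξ in S, Real.fourierChar (inner ℝ ξ x) • (𝓕 f : L²(E, F)) ξ := by
  rw [bandLimit, Real.fourierInv_eq, ← integral_indicator hS]
  refine integral_congr_ae (ae_of_all _ fun ξ => ?_)
  by_cases hξ : ξ ∈ S <;> simp [hξ]

theorem norm_bandLimit_le (hS : MeasurableSet S) (hSfin : volume S ≠ ∞) (f : L²(E, F)) (x : E) :
    ‖bandLimit S f x‖ ≤ volume.real S ^ (1 / 2 : ℝ) * ‖f‖ := by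
  have h : ‖bandLimit S f x‖ₑ ≤ volume S ^ (1 / 2 : ℝ) * ‖f‖ₑ := by
    refine (enorm_bandLimit_le f hS x).trans ?_
    rw [← ofReal_norm f, ← Lp.norm_fourier_eq f, ofReal_norm, Lp.enorm_def]
    gcongr
    exact eLpNorm_indicator_le _
  have hfin : volume S ^ (1 / 2 : ℝ) * ‖f‖ₑ ≠ ∞ :=
    ENNReal.mul_ne_top (ENNReal.rpow_ne_top_of_nonneg (by norm_num) hSfin) enorm_ne_top
  simpa [ENNReal.toReal_mul, ← ENNReal.toReal_rpow, Measure.real] using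
    ENNReal.toReal_mono hfin h

/-- Evaluation at `x` of the frequency truncation to a set `S` of finite measure, as a continuous
linear map on `L²`. -/
def bandLimitEval (hS : MeasurableSet S) (hSfin : volume S ≠ ∞) (x : E) : L²(E, F) →L[ℂ] F :=
  LinearMap.mkContinuous
    { toFun := fun f => bandLimit S f x
      map_add' := fun f g => by
        have h := Lp.coeFn_add (𝓕 f : L²(E, F)) (𝓕 g)
        simp only [bandLimit_apply hS, FourierTransform.fourier_add]
        rw [← integral_add (integrableOn_fourierChar_smul hS hSfin _ x)
          (integrableOn_fourierChar_smul hS hSfin _ x)]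
        refine integral_congr_ae (ae_restrict_of_ae ?_)
        filter_upwards [h] with ξ hξ
        rw [hξ, Pi.add_apply, smul_add]
      map_smul' := fun c f => by
        have h := Lp.coeFn_smul c (𝓕 f : L²(E, F))
        simp only [bandLimit_apply hS, FourierTransform.fourier_smul, RingHom.id_apply]
        rw [← integral_smul]
        refine integral_congr_ae (ae_restrict_of_ae ?_)
        filter_upwards [h] with ξ hξ
        rw [hξ, Pi.smul_apply, smul_comm] }
    (volume.real S ^ (1 / 2 : ℝ)) fun f => norm_bandLimit_le hS hSfin f x

lemma exists_schwartzMap_fourierChar_mul {φ : 𝓢(E, ℂ)} (hφ : HasCompactSupport φ) (y : E) :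
    ∃ ψ : 𝓢(E, ℂ), (∀ ξ, ψ ξ = Real.fourierChar (inner ℝ ξ y) * φ ξ) ∧
      ∀ x, (𝓕 ψ : 𝓢(E, ℂ)) x = (𝓕 φ : 𝓢(E, ℂ)) (x - y) := by
  have hsmooth : ContDiff ℝ (⊤ : ℕ∞) fun ξ : E => (Real.fourierChar (inner ℝ ξ y) : ℂ) * φ ξ := by
    have hinner : ContDiff ℝ (⊤ : ℕ∞) fun ξ : E => ((2 * Real.pi * inner ℝ ξ y : ℝ) : ℂ) :=
      Complex.ofRealCLM.contDiff.comp (contDiff_const.mul (contDiff_id.inner ℝ contDiff_const))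
    simp only [Real.fourierChar_apply]
    exact (hinner.mul contDiff_const).cexp.mul (φ.smooth _)
  refine ⟨hφ.mul_left.toSchwartzMap hsmooth, fun ξ => rfl, fun x => ?_⟩
  rw [SchwartzMap.fourier_coe, SchwartzMap.fourier_coe, Real.fourier_eq, Real.fourier_eq]
  refine integral_congr_ae (ae_of_all _ fun ξ => ?_)
  change Real.fourierChar (-inner ℝ ξ x) • (Real.fourierChar (inner ℝ ξ y) * φ ξ : ℂ) = _
  rw [← smul_eq_mul, ← Circle.smul_def, smul_smul, ← AddChar.map_add_eq_mul]
  simp only [inner_sub_right, neg_sub, neg_add_eq_sub]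

theorem fourier_translateL2_ae_eq (y : E) (f : L²(E, F)) :
    (𝓕 (translateL2 y f) : L²(E, F)) =ᵐ[volume]
      fun ξ => Real.fourierChar (inner ℝ ξ y) • (𝓕 f : L²(E, F)) ξ := by
  have hchar : Continuous fun ξ : E => (Real.fourierChar (inner ℝ ξ y) : ℂ) := by fun_prop
  refine ae_eq_of_forall_integral_schwartzMap_smul_eq (locallyIntegrable_Lp_two _) ?_
    fun φ hφ => ?_
  · exact locallyIntegrableOn_univ.1 <| ((locallyIntegrable_Lp_two (𝓕 f : L²(E, F)))
      |>.locallyIntegrableOn Set.univ)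
      |>.continuousOn_smul isOpen_univ.isLocallyClosed hchar.continuousOn
  obtain ⟨ψ, hψ, hψF⟩ := exists_schwartzMap_fourierChar_mul hφ y
  calc ∫ ξ, φ ξ • (𝓕 (translateL2 y f) : L²(E, F)) ξ
      = ∫ x, (𝓕 φ : 𝓢(E, ℂ)) x • translateL2 y f x := integral_smul_fourier_Lp _ _
    _ = ∫ x, (𝓕 ψ : 𝓢(E, ℂ)) (x + y) • f (x + y) := by
        refine integral_congr_ae ?_
        filter_upwards [translateL2_ae_eq y f] with x hx
        rw [hx, hψF, add_sub_cancel_right]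
    _ = ∫ x, (𝓕 ψ : 𝓢(E, ℂ)) x • f x :=
        integral_add_right_eq_self (fun x => (𝓕 ψ : 𝓢(E, ℂ)) x • f x) y
    _ = ∫ ξ, ψ ξ • (𝓕 f : L²(E, F)) ξ := (integral_smul_fourier_Lp _ _).symm
    _ = ∫ ξ, φ ξ • Real.fourierChar (inner ℝ ξ y) • (𝓕 f : L²(E, F)) ξ := by
        simp only [hψ, mul_comm, mul_smul, Circle.smul_def]

theorem bandLimit_translateL2 (hS : MeasurableSet S) (y : E) (f : L²(E, F)) (x : E) :
    bandLimit S (translateL2 y f) x = bandLimit S f (x + y) := by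
  rw [bandLimit_apply hS, bandLimit_apply hS]
  refine integral_congr_ae (ae_restrict_of_ae ?_)
  filter_upwards [fourier_translateL2_ae_eq y f] with ξ hξ
  rw [hξ, inner_add_right, AddChar.map_add_eq_mul, mul_smul]

end BandLimitEval

section LowPass

variable {E F : Type*} [NormedAddCommGroup E] [InnerProductSpace ℝ E] [FiniteDimensional ℝ E]
  [MeasurableSpace E] [BorelSpace E]
  [NormedAddCommGroup F] [InnerProductSpace ℂ F] [CompleteSpace F] {S T : Set E}
  {f g : L²(E, F)} {p : ℝ}

lemma eLpNorm_two_fourier (f : L²(E, F)) : eLpNorm (𝓕 f : L²(E, F)) 2 volume = ‖f‖ₑ := by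
  rw [← Lp.enorm_def, ← ofReal_norm, Lp.norm_fourier_eq, ofReal_norm]

theorem eLpNorm_indicator_fourier_le_of_laplacian_eq (h : Δ (f : 𝓢'(E, F)) = (g : 𝓢'(E, F)))
    (k : ℕ) (hS : ∀ ξ ∈ S, (2 : ℝ) ^ k ≤ ‖ξ‖) :
    eLpNorm (S.indicator (𝓕 f : L²(E, F))) 2 volume ≤ (4 ^ k)⁻¹ * ‖g‖ₑ := by
  have key : ∀ᵐ ξ, ‖S.indicator (𝓕 f : L²(E, F)) ξ‖ ≤ ((4 : ℝ) ^ k)⁻¹ * ‖(𝓕 g : L²(E, F)) ξ‖ := by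
    filter_upwards [fourier_ae_eq_of_laplacian_eq h] with ξ hξ
    by_cases hmem : ξ ∈ S
    · have hlow : (4 : ℝ) ^ k ≤ (2 * Real.pi * ‖ξ‖) ^ 2 := by
        calc (4 : ℝ) ^ k = (2 ^ k) ^ 2 := by rw [← pow_mul, mul_comm, pow_mul]; norm_num
          _ ≤ (2 * Real.pi * ‖ξ‖) ^ 2 := by
              gcongr
              nlinarith [hS ξ hmem, Real.pi_gt_three, norm_nonneg ξ]
      rw [Set.indicator_of_mem hmem, le_inv_mul_iff₀ (by positivity), hξ, norm_smul, norm_neg,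
        Real.norm_of_nonneg (by positivity)]
      gcongr
    · rw [Set.indicator_of_notMem hmem, norm_zero]
      positivity
  have := eLpNorm_le_mul_eLpNorm_of_ae_le_mul key 2
  rwa [eLpNorm_two_fourier, ENNReal.ofReal_inv_of_pos (by positivity),
    ENNReal.ofReal_pow (by norm_num), ENNReal.ofReal_ofNat] at this

lemma bandLimit_sub_bandLimit (hST : S ⊆ T) (hS : MeasurableSet S) (hT : MeasurableSet T)
    (hTfin : volume T ≠ ∞) (f : L²(E, F)) :
    bandLimit T f - bandLimit S f = bandLimit (T \ S) f := by
  funext x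
  rw [Pi.sub_apply, bandLimit_apply hT, bandLimit_apply hS, bandLimit_apply (hT.diff hS),
    setIntegral_sdiff hS (integrableOn_fourierChar_smul hT hTfin _ x) hST]

/-- The part of `f ∈ L²` carried by the frequencies `‖ξ‖ < 2 ^ K`. -/
def lowPass (K : ℕ) (f : L²(E, F)) : E → F := bandLimit (Metric.ball 0 (2 ^ K)) f

lemma continuous_lowPass (K : ℕ) (f : L²(E, F)) : Continuous (lowPass K f) :=
  continuous_bandLimit f measurableSet_ball measure_ball_lt_top.ne

lemma lowPass_zero (K : ℕ) (x : E) : lowPass K (0 : L²(E, F)) x = 0 :=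
  map_zero (bandLimitEval measurableSet_ball measure_ball_lt_top.ne x)

theorem eLpNorm_two_sub_lowPass_le (h : Δ (f : 𝓢'(E, F)) = (g : 𝓢'(E, F))) (K : ℕ) :
    eLpNorm (⇑f - lowPass K f) 2 volume ≤ (4 ^ K)⁻¹ * ‖g‖ₑ := by
  rw [lowPass, eLpNorm_two_sub_bandLimit f measurableSet_ball measure_ball_lt_top.ne]
  exact eLpNorm_indicator_fourier_le_of_laplacian_eq h K fun ξ hξ => by simpa using hξ

variable (E p) in
/-- The constant in the `L^p` bound for the dyadic frequency shell `2 ^ k ≤ ‖ξ‖ < 2 ^ (k + 1)`. -/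
def shellConst (k : ℕ) : ℝ≥0∞ :=
  volume (Metric.ball (0 : E) (2 ^ (k + 1))) ^ (1 / 2 - 1 / p) * (4 ^ k)⁻¹

theorem eLpNorm_lowPass_succ_sub_le (h : Δ (f : 𝓢'(E, F)) = (g : 𝓢'(E, F))) (hp : 2 ≤ p)
    (k : ℕ) : eLpNorm (lowPass (k + 1) f - lowPass k f) (ENNReal.ofReal p) volume ≤
      shellConst E p k * ‖g‖ₑ := by
  have hsub : Metric.ball (0 : E) (2 ^ k) ⊆ Metric.ball 0 (2 ^ (k + 1)) :=
    Metric.ball_subset_ball (pow_le_pow_right₀ one_le_two k.le_succ)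
  have hs : 0 ≤ 1 / 2 - 1 / p := sub_nonneg.2 (one_div_le_one_div_of_le two_pos hp)
  have hfin : volume (Metric.ball (0 : E) (2 ^ (k + 1)) \ Metric.ball 0 (2 ^ k)) ≠ ∞ :=
    measure_ne_top_of_subset Set.sdiff_subset measure_ball_lt_top.ne
  rw [lowPass, lowPass,
    bandLimit_sub_bandLimit hsub measurableSet_ball measurableSet_ball measure_ball_lt_top.ne,
    shellConst, mul_assoc]
  refine (eLpNorm_bandLimit_le f (measurableSet_ball.diff measurableSet_ball) hfin hp).trans ?_
  gcongr
  · exact Set.sdiff_subset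
  · exact eLpNorm_indicator_fourier_le_of_laplacian_eq h k fun ξ hξ => by simpa using hξ.2

lemma shellConst_eq (hp : 2 ≤ p) (k : ℕ) :
    shellConst E p k =
      (2 ^ Module.finrank ℝ E * volume (Metric.ball (0 : E) 1)) ^ (1 / 2 - 1 / p) *
        (2 ^ (Module.finrank ℝ E * (1 / 2 - 1 / p) - 2)) ^ k := by
  set d := Module.finrank ℝ E
  have hs : 0 ≤ 1 / 2 - 1 / p := sub_nonneg.2 (one_div_le_one_div_of_le two_pos hp)
  set s := 1 / 2 - 1 / p
  have hball : volume (Metric.ball (0 : E) (2 ^ (k + 1))) =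
      (2 ^ k) ^ d * (2 ^ d * volume (Metric.ball (0 : E) 1)) := by
    rw [Measure.addHaar_ball_of_pos _ _ (by positivity), pow_succ, mul_pow, ← mul_assoc,
      ENNReal.ofReal_mul (by positivity), ENNReal.ofReal_pow (by positivity),
      ENNReal.ofReal_pow (by positivity), ENNReal.ofReal_pow (by positivity), ENNReal.ofReal_ofNat]
  have hfour : ((4 : ℝ≥0∞) ^ k)⁻¹ = 2 ^ (-2 * k : ℝ) := by
    rw [neg_mul, ENNReal.rpow_neg, ENNReal.rpow_mul, ENNReal.rpow_natCast, ENNReal.rpow_ofNat]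
    norm_num
  have htwo : ((2 ^ k) ^ d : ℝ≥0∞) ^ s = 2 ^ (k * d * s : ℝ) := by
    rw [ENNReal.rpow_mul, ENNReal.rpow_mul, ENNReal.rpow_natCast, ENNReal.rpow_natCast]
  rw [shellConst, hball, ENNReal.mul_rpow_of_nonneg _ _ hs, htwo, hfour, mul_comm _ (_ ^ s),
    mul_assoc, ← ENNReal.rpow_add _ _ two_ne_zero ENNReal.ofNat_ne_top,
    ← ENNReal.rpow_mul_natCast]
  ring_nf

theorem tsum_shellConst_ne_top (hp : 2 ≤ p)
    (hsub : Module.finrank ℝ E * (1 / 2 - 1 / p) < 2) : ∑' k, shellConst E p k ≠ ∞ := by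
  have hs : 0 ≤ 1 / 2 - 1 / p := sub_nonneg.2 (one_div_le_one_div_of_le two_pos hp)
  have hratio : (2 : ℝ≥0∞) ^ (Module.finrank ℝ E * (1 / 2 - 1 / p) - 2) < 1 :=
    ENNReal.rpow_lt_one_of_one_lt_of_neg ENNReal.one_lt_two (by linarith)
  simp_rw [shellConst_eq hp, ENNReal.tsum_mul_left, ENNReal.tsum_geometric]
  refine ENNReal.mul_ne_top (ENNReal.rpow_ne_top_of_nonneg hs ?_)
    (ENNReal.inv_ne_top.2 (tsub_pos_of_lt hratio).ne')
  exact ENNReal.mul_ne_top (ENNReal.pow_ne_top ENNReal.ofNat_ne_top) measure_ball_lt_top.ne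

lemma eLpNorm_lowPass_add_sub_le (h : Δ (f : 𝓢'(E, F)) = (g : 𝓢'(E, F))) (hp : 2 ≤ p) (K n : ℕ) :
    eLpNorm (lowPass (n + K) f - lowPass K f) (ENNReal.ofReal p) volume ≤
      (∑ k ∈ Finset.range n, shellConst E p (k + K)) * ‖g‖ₑ := by
  induction n with
  | zero => simp
  | succ n ih =>
    rw [← sub_add_sub_cancel (lowPass (n + 1 + K) f) (lowPass (n + K) f), add_comm,
      Finset.sum_range_succ, add_mul]
    refine (eLpNorm_add_le ((continuous_lowPass _ f).sub (continuous_lowPass _ f)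
      |>.aestronglyMeasurable) ((continuous_lowPass _ f).sub (continuous_lowPass _ f)
      |>.aestronglyMeasurable) ?_).trans (add_le_add ih ?_)
    · exact ENNReal.one_le_ofReal.2 (one_le_two.trans hp)
    · rw [add_right_comm]
      exact eLpNorm_lowPass_succ_sub_le h hp (n + K)

lemma tendstoInMeasure_lowPass (h : Δ (f : 𝓢'(E, F)) = (g : 𝓢'(E, F))) :
    TendstoInMeasure volume (fun K => lowPass K f) atTop f := by
  refine tendstoInMeasure_of_tendsto_eLpNorm two_ne_zero
    (fun K => (continuous_lowPass K f).aestronglyMeasurable) (Lp.aestronglyMeasurable f) ?_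
  have hzero : Tendsto (fun K : ℕ => ((4 : ℝ≥0∞) ^ K)⁻¹ * ‖g‖ₑ) atTop (𝓝 0) := by
    simpa only [ENNReal.inv_pow, zero_mul] using ENNReal.Tendsto.mul_const
      (ENNReal.tendsto_pow_atTop_nhds_zero_of_lt_one (by norm_num : (4 : ℝ≥0∞)⁻¹ < 1))
      (Or.inr (enorm_ne_top (x := g)))
  refine tendsto_of_tendsto_of_tendsto_of_le_of_le tendsto_const_nhds hzero (fun _ => bot_le)
    fun K => ?_
  rw [eLpNorm_sub_comm]
  exact eLpNorm_two_sub_lowPass_le h K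

theorem eLpNorm_sub_lowPass_le (h : Δ (f : 𝓢'(E, F)) = (g : 𝓢'(E, F))) (hp : 2 ≤ p) (K : ℕ) :
    eLpNorm (⇑f - lowPass K f) (ENNReal.ofReal p) volume ≤
      (∑' k, shellConst E p (k + K)) * ‖g‖ₑ := by
  have hlim : TendstoInMeasure volume (fun n => lowPass (n + K) f - lowPass K f) atTop
      (⇑f - lowPass K f) := by
    refine fun ε hε => ((tendstoInMeasure_lowPass h ε hε).comp (tendsto_add_atTop_nat K)).congr
      fun n => ?_
    simp
  refine eLpNorm_le_of_tendstoInMeasure (.of_forall fun n =>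
    (eLpNorm_lowPass_add_sub_le h hp K n).trans ?_) hlim fun n =>
    ((continuous_lowPass _ f).sub (continuous_lowPass K f)).aestronglyMeasurable
  gcongr
  exact ENNReal.sum_le_tsum _

theorem tendsto_tsum_shellConst (hp : 2 ≤ p)
    (hsub : Module.finrank ℝ E * (1 / 2 - 1 / p) < 2) :
    Tendsto (fun K => ∑' k, shellConst E p (k + K)) atTop (𝓝 0) :=
  ENNReal.tendsto_sum_nat_add _ (tsum_shellConst_ne_top hp hsub)

lemma eLpNorm_lowPass_le (f : L²(E, F)) (hp : 2 ≤ p) (K : ℕ) :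
    eLpNorm (lowPass K f) (ENNReal.ofReal p) volume ≤
      volume (Metric.ball (0 : E) (2 ^ K)) ^ (1 / 2 - 1 / p) * ‖f‖ₑ := by
  refine (eLpNorm_bandLimit_le f measurableSet_ball measure_ball_lt_top.ne hp).trans ?_
  rw [← eLpNorm_two_fourier]
  gcongr
  exact eLpNorm_indicator_le _

theorem eLpNorm_le_of_laplacian_eq (h : Δ (f : 𝓢'(E, F)) = (g : 𝓢'(E, F))) (hp : 2 ≤ p) :
    eLpNorm f (ENNReal.ofReal p) volume ≤ (∑' k, shellConst E p k) * ‖g‖ₑ +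
      volume (Metric.ball (0 : E) 1) ^ (1 / 2 - 1 / p) * ‖f‖ₑ := by
  calc eLpNorm f (ENNReal.ofReal p) volume
      = eLpNorm ((⇑f - lowPass 0 f) + lowPass 0 f) (ENNReal.ofReal p) volume := by
        rw [sub_add_cancel]
    _ ≤ eLpNorm (⇑f - lowPass 0 f) (ENNReal.ofReal p) volume +
          eLpNorm (lowPass 0 f) (ENNReal.ofReal p) volume :=
        eLpNorm_add_le ((Lp.aestronglyMeasurable f).sub
          (continuous_lowPass 0 f).aestronglyMeasurable)
          (continuous_lowPass 0 f).aestronglyMeasurable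
          (ENNReal.one_le_ofReal.2 (one_le_two.trans hp))
    _ ≤ _ := by
        gcongr
        · simpa using eLpNorm_sub_lowPass_le h hp 0
        · simpa using eLpNorm_lowPass_le f hp 0

end LowPass

section WeakConvergence

variable {𝕜 H ι : Type*} [RCLike 𝕜] [NormedAddCommGroup H] [InnerProductSpace 𝕜 H]
  {l : Filter ι} {u : ι → H} {v : H}

variable (𝕜) in
/-- Weak convergence: convergence against every continuous linear functional. -/
def TendstoWeakly (u : ι → H) (l : Filter ι) (v : H) : Prop :=
  ∀ L : H →L[𝕜] 𝕜, Tendsto (fun n => L (u n)) l (𝓝 (L v))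

lemma TendstoWeakly.add {u' : ι → H} {v' : H} (h : TendstoWeakly 𝕜 u l v)
    (h' : TendstoWeakly 𝕜 u' l v') : TendstoWeakly 𝕜 (fun n => u n + u' n) l (v + v') :=
  fun L => by simpa only [map_add] using (h L).add (h' L)

lemma TendstoWeakly.sub_const (h : TendstoWeakly 𝕜 u l v) (w : H) :
    TendstoWeakly 𝕜 (fun n => u n - w) l (v - w) :=
  fun L => by simpa only [map_sub] using (h L).sub_const (L w)

theorem TendstoWeakly.norm_sq_sub_norm_sub_sq (h : TendstoWeakly 𝕜 u l v) :
    Tendsto (fun n => ‖u n‖ ^ 2 - ‖u n - v‖ ^ 2) l (𝓝 (‖v‖ ^ 2)) := by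
  have hinner : Tendsto (fun n => RCLike.re (inner 𝕜 v (u n))) l (𝓝 (‖v‖ ^ 2)) := by
    rw [norm_sq_eq_re_inner (𝕜 := 𝕜) v]
    exact (RCLike.continuous_re.tendsto _).comp (h (innerSL 𝕜 v))
  have hlim := (hinner.const_mul 2).sub_const (‖v‖ ^ 2)
  rw [two_mul, add_sub_cancel_right] at hlim
  refine hlim.congr fun n => ?_
  rw [norm_sub_sq (𝕜 := 𝕜), inner_re_symm]
  ring

variable [CompleteSpace H]

theorem exists_tendstoWeakly_of_norm_le [TopologicalSpace.SeparableSpace H] {u : ℕ → H} {R : ℝ}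
    (hR : ∀ n, ‖u n‖ ≤ R) :
    ∃ φ : ℕ → ℕ, StrictMono φ ∧ ∃ v, TendstoWeakly 𝕜 (fun n => u (φ n)) atTop v := by
  obtain ⟨Λ, -, φ, hφ, hΛ⟩ := WeakDual.isSeqCompact_closedBall 𝕜 H 0 R
    (x := fun n => StrongDual.toWeakDual (InnerProductSpace.toDual 𝕜 H (u n)))
    (fun n => by simpa using hR n)
  refine ⟨φ, hφ, (InnerProductSpace.toDual 𝕜 H).symm (WeakDual.toStrongDual Λ), fun L => ?_⟩
  obtain ⟨w, rfl⟩ := (InnerProductSpace.toDual 𝕜 H).surjective L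
  have hconj := (RCLike.continuous_conj.tendsto _).comp
    (tendsto_iff_forall_eval_tendsto_topDualPairing.1 hΛ w)
  rw [InnerProductSpace.toDual_apply_apply, ← inner_conj_symm,
    InnerProductSpace.toDual_symm_apply]
  exact hconj.congr fun n => inner_conj_symm w (u (φ n))

theorem exists_forall_tendstoWeakly_of_norm_le [TopologicalSpace.SeparableSpace H] {κ : Type*}
    [Finite κ] {u : κ → ℕ → H} {R : ℝ} (hR : ∀ i n, ‖u i n‖ ≤ R) :
    ∃ φ : ℕ → ℕ, StrictMono φ ∧
      ∃ v : κ → H, ∀ i, TendstoWeakly 𝕜 (fun n => u i (φ n)) atTop (v i) := by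
  have := Fintype.ofFinite κ
  obtain ⟨φ, hφ, v, hv⟩ := exists_tendstoWeakly_of_norm_le (𝕜 := 𝕜) (R := √(∑ _ : κ, R ^ 2))
    (u := fun n => WithLp.toLp 2 fun i => u i n) fun n => by
      rw [PiLp.norm_eq_of_L2]
      gcongr
      exact hR _ n
  exact ⟨φ, hφ, v, fun i L => hv (L.comp (PiLp.proj 2 _ i))⟩

end WeakConvergence

section Nonvanishing

variable {E F : Type*} [NormedAddCommGroup E] [InnerProductSpace ℝ E] [FiniteDimensional ℝ E]
  [MeasurableSpace E] [BorelSpace E]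
  [NormedAddCommGroup F] [InnerProductSpace ℂ F] [CompleteSpace F] {f g : L²(E, F)} {p : ℝ}

lemma eLpNorm_lowPass_le_of_norm_le (hp : 2 < p) {K : ℕ} {δ : ℝ}
    (hδ : ∀ x, ‖lowPass K f x‖ ≤ δ) :
    eLpNorm (lowPass K f) (ENNReal.ofReal p) volume ≤
      ENNReal.ofReal δ ^ (1 - 2 / p) * ‖f‖ₑ ^ (2 / p) := by
  have hsup (x : E) : ‖lowPass K f x‖ₑ ≤ ENNReal.ofReal δ := by
    rw [← ofReal_norm]
    exact ENNReal.ofReal_le_ofReal (hδ x)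
  refine (eLpNorm_le_rpow_mul_eLpNorm_rpow_of_enorm_le (μ := volume) two_pos hp.le
    ENNReal.ofReal_ne_top (.of_forall hsup)).trans ?_
  gcongr
  simpa using eLpNorm_lowPass_le f le_rfl K

theorem exists_le_norm_lowPass (hp : 2 < p) (hsub : Module.finrank ℝ E * (1 / 2 - 1 / p) < 2)
    (R : ℝ) {ε : ℝ≥0∞} (hε : ε ≠ 0) : ∃ (K : ℕ) (δ : ℝ), 0 < δ ∧ ∀ f g : L²(E, F),
      Δ (f : 𝓢'(E, F)) = (g : 𝓢'(E, F)) → ‖f‖ ≤ R → ‖g‖ ≤ R →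
      ε ≤ eLpNorm f (ENNReal.ofReal p) volume → ∃ x, δ ≤ ‖lowPass K f x‖ := by
  have hexp : 0 < 1 - 2 / p := sub_pos.2 ((div_lt_one (by linarith)).2 hp)
  obtain ⟨K, hK⟩ : ∃ K, (∑' k, shellConst E p (k + K)) * ENNReal.ofReal R < ε / 2 := by
    have hlim := ENNReal.Tendsto.mul_const (b := ENNReal.ofReal R)
      (tendsto_tsum_shellConst hp.le hsub) (Or.inr ENNReal.ofReal_ne_top)
    rw [zero_mul] at hlim
    exact (hlim.eventually_lt_const (ENNReal.half_pos hε)).exists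
  obtain ⟨δ, hlow, hδ⟩ : ∃ δ : ℝ,
      ENNReal.ofReal δ ^ (1 - 2 / p) * ENNReal.ofReal R ^ (2 / p) < ε / 2 ∧ 0 < δ := by
    have hlim : Tendsto (fun δ : ℝ =>
        ENNReal.ofReal δ ^ (1 - 2 / p) * ENNReal.ofReal R ^ (2 / p)) (𝓝[>] 0) (𝓝 0) := by
      have hpow := (ENNReal.continuous_rpow_const (y := 1 - 2 / p)).comp ENNReal.continuous_ofReal
      have := ENNReal.Tendsto.mul_const (b := ENNReal.ofReal R ^ (2 / p)) (hpow.tendsto 0)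
        (Or.inr (ENNReal.rpow_ne_top_of_nonneg (by positivity) ENNReal.ofReal_ne_top))
      rw [Function.comp_apply, ENNReal.ofReal_zero, ENNReal.zero_rpow_of_pos hexp, zero_mul] at this
      exact this.mono_left nhdsWithin_le_nhds
    exact ((hlim.eventually_lt_const (ENNReal.half_pos hε)).and self_mem_nhdsWithin).exists
  refine ⟨K, δ, hδ, fun f g h hf hg hfε => ?_⟩
  by_contra! hsmall
  replace hf := ENNReal.ofReal_le_ofReal hf
  replace hg := ENNReal.ofReal_le_ofReal hg
  rw [ofReal_norm] at hf hg
  refine hfε.not_gt ?_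
  calc eLpNorm f (ENNReal.ofReal p) volume
      = eLpNorm ((⇑f - lowPass K f) + lowPass K f) (ENNReal.ofReal p) volume := by
        rw [sub_add_cancel]
    _ ≤ eLpNorm (⇑f - lowPass K f) (ENNReal.ofReal p) volume +
          eLpNorm (lowPass K f) (ENNReal.ofReal p) volume :=
        eLpNorm_add_le ((Lp.aestronglyMeasurable f).sub
          (continuous_lowPass K f).aestronglyMeasurable)
          (continuous_lowPass K f).aestronglyMeasurable
          (ENNReal.one_le_ofReal.2 (by linarith))
    _ ≤ (∑' k, shellConst E p (k + K)) * ENNReal.ofReal R +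
          ENNReal.ofReal δ ^ (1 - 2 / p) * ENNReal.ofReal R ^ (2 / p) := by
        refine add_le_add ((eLpNorm_sub_lowPass_le h hp.le K).trans (by gcongr)) ?_
        exact (eLpNorm_lowPass_le_of_norm_le hp fun x => (hsmall x).le).trans (by gcongr)
    _ < ε := ENNReal.add_halves ε ▸ ENNReal.add_lt_add hK hlow

end Nonvanishing

section AeConvergence

lemma exists_isFiniteMeasure_le_absolutelyContinuous {α : Type*} [MeasurableSpace α]
    (μ : Measure α) [SigmaFinite μ] : ∃ ν : Measure α, IsFiniteMeasure ν ∧ ν ≤ μ ∧ μ ≪ ν := by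
  obtain ⟨g, hg, hmeas, hint⟩ := exists_pos_lintegral_lt_of_sigmaFinite μ one_ne_zero
  refine ⟨μ.withDensity fun x => min (g x : ℝ≥0∞) 1, isFiniteMeasure_withDensity ?_, ?_,
    withDensity_absolutelyContinuous' (by fun_prop) (.of_forall fun x => ?_)⟩
  · exact ((lintegral_mono fun x => min_le_left _ _).trans_lt (hint.trans ENNReal.one_lt_top)).ne
  · calc μ.withDensity (fun x => min (g x : ℝ≥0∞) 1) ≤ μ.withDensity 1 :=
          withDensity_mono (.of_forall fun x => min_le_right _ _)
      _ = μ := withDensity_one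
  · exact (lt_min (ENNReal.coe_pos.2 (hg x)) one_pos).ne'

lemma tendsto_eLpNorm_of_norm_le_of_tendsto_ae {α G : Type*} [MeasurableSpace α]
    [NormedAddCommGroup G] {ν : Measure α} [IsFiniteMeasure ν] {p : ℝ≥0∞} (hp : 1 ≤ p)
    (hp' : p ≠ ∞) {f : ℕ → α → G} (hf : ∀ n, AEStronglyMeasurable (f n) ν) {C : ℝ}
    (hC : ∀ n x, ‖f n x‖ ≤ C) (hlim : ∀ᵐ x ∂ν, Tendsto (fun n => f n x) atTop (𝓝 0)) :
    Tendsto (fun n => eLpNorm (f n) p ν) atTop (𝓝 0) := by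
  have hui : UnifIntegrable f p ν := by
    refine unifIntegrable_of hp hp' hf fun ε _ => ⟨Real.toNNReal (C + 1), fun n => ?_⟩
    have hempty : {x | Real.toNNReal (C + 1) ≤ ‖f n x‖₊} = ∅ := by
      refine Set.eq_empty_of_forall_notMem fun x hx => ?_
      have : C + 1 ≤ ‖f n x‖ := Real.toNNReal_le_iff_le_coe.1 hx
      linarith [hC n x]
    simp [hempty]
  simpa using tendsto_Lp_finite_of_tendsto_ae hp hp' hf MemLp.zero hui hlim

variable {E : Type*} [NormedAddCommGroup E] [InnerProductSpace ℝ E] [FiniteDimensional ℝ E]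
  [MeasurableSpace E] [BorelSpace E] {f g : ℕ → L²(E, ℂ)} {R : ℝ}

lemma TendstoWeakly.tendsto_lowPass {ι : Type*} {l : Filter ι} {u : ι → L²(E, ℂ)} {v : L²(E, ℂ)}
    (h : TendstoWeakly ℂ u l v) (K : ℕ) (x : E) :
    Tendsto (fun n => lowPass K (u n) x) l (𝓝 (lowPass K v x)) :=
  h (bandLimitEval measurableSet_ball measure_ball_lt_top.ne x)

theorem TendstoWeakly.tendsto_eLpNorm_zero (h : TendstoWeakly ℂ f atTop 0)
    (hlap : ∀ n, Δ (f n : 𝓢'(E, ℂ)) = (g n : 𝓢'(E, ℂ)))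
    (hf : ∀ n, ‖f n‖ ≤ R) (hg : ∀ n, ‖g n‖ ≤ R) {ν : Measure E} [IsFiniteMeasure ν]
    (hν : ν ≤ volume) : Tendsto (fun n => eLpNorm (f n) 2 ν) atTop (𝓝 0) := by
  have hlow (K : ℕ) : Tendsto (fun n => eLpNorm (lowPass K (f n)) 2 ν) atTop (𝓝 0) := by
    refine tendsto_eLpNorm_of_norm_le_of_tendsto_ae one_le_two ENNReal.ofNat_ne_top
      (fun n => (continuous_lowPass K _).aestronglyMeasurable)
      (C := volume.real (Metric.ball (0 : E) (2 ^ K)) ^ (1 / 2 : ℝ) * R) (fun n x => ?_)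
      (.of_forall fun x => ?_)
    · refine (norm_bandLimit_le measurableSet_ball measure_ball_lt_top.ne _ x).trans ?_
      gcongr
      exact hf n
    · simpa only [lowPass_zero] using h.tendsto_lowPass K x
  have hhigh (K n : ℕ) : eLpNorm (⇑(f n) - lowPass K (f n)) 2 ν ≤
      (4⁻¹) ^ K * ENNReal.ofReal R := by
    refine (eLpNorm_mono_measure _ hν).trans ((eLpNorm_two_sub_lowPass_le (hlap n) K).trans ?_)
    rw [ENNReal.inv_pow, ← ofReal_norm]
    gcongr
    exact hg n
  have htail : Tendsto (fun K : ℕ => (4⁻¹ : ℝ≥0∞) ^ K * ENNReal.ofReal R) atTop (𝓝 0) := by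
    simpa only [zero_mul] using ENNReal.Tendsto.mul_const
      (ENNReal.tendsto_pow_atTop_nhds_zero_of_lt_one (by norm_num))
      (Or.inr (ENNReal.ofReal_ne_top (r := R)))
  refine ENNReal.tendsto_nhds_zero.2 fun ε hε => ?_
  obtain ⟨K, hK⟩ := (ENNReal.tendsto_nhds_zero.1 htail _ (ENNReal.half_pos hε.ne')).exists
  filter_upwards [ENNReal.tendsto_nhds_zero.1 (hlow K) _ (ENNReal.half_pos hε.ne')] with n hn
  rw [← sub_add_cancel (f n : E → ℂ) (lowPass K (f n)), ← ENNReal.add_halves ε]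
  refine (eLpNorm_add_le (((Lp.aestronglyMeasurable _).mono_measure hν).sub
    (continuous_lowPass K _).aestronglyMeasurable) (continuous_lowPass K _).aestronglyMeasurable
    one_le_two).trans ?_
  exact add_le_add ((hhigh K n).trans hK) hn

theorem TendstoWeakly.exists_subseq_tendsto_ae (h : TendstoWeakly ℂ f atTop 0)
    (hlap : ∀ n, Δ (f n : 𝓢'(E, ℂ)) = (g n : 𝓢'(E, ℂ)))
    (hf : ∀ n, ‖f n‖ ≤ R) (hg : ∀ n, ‖g n‖ ≤ R) :
    ∃ φ : ℕ → ℕ, StrictMono φ ∧ ∀ᵐ x, Tendsto (fun n => f (φ n) x) atTop (𝓝 0) := by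
  obtain ⟨ν, hfin, hν, hac⟩ := exists_isFiniteMeasure_le_absolutelyContinuous (volume : Measure E)
  obtain ⟨φ, hφ, hae⟩ := (tendstoInMeasure_of_tendsto_eLpNorm (g := 0) two_ne_zero
    (fun n => (Lp.aestronglyMeasurable (f n)).mono_measure hν) aestronglyMeasurable_zero
    (by simpa using h.tendsto_eLpNorm_zero hlap hf hg hν)).exists_seq_tendsto_ae
  exact ⟨φ, hφ, hac.ae_le hae⟩

end AeConvergence

section BrezisLieb

lemma exists_add_rpow_le {p ε : ℝ} (hp : 0 < p) (hε : 0 < ε) :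
    ∃ C, 0 ≤ C ∧ ∀ s t : ℝ, 0 ≤ s → 0 ≤ t → (s + t) ^ p ≤ (1 + ε) * s ^ p + C * t ^ p := by
  obtain ⟨η, hη_lt, hη⟩ : ∃ η : ℝ, (1 + η) ^ p < 1 + ε ∧ 0 < η := by
    have hlim : Tendsto (fun η : ℝ => (1 + η) ^ p) (𝓝 0) (𝓝 ((1 + 0) ^ p)) :=
      (tendsto_const_nhds.add tendsto_id).rpow_const (Or.inr hp.le)
    rw [add_zero, Real.one_rpow] at hlim
    exact (((hlim.mono_left (nhdsWithin_le_nhds (s := Set.Ioi 0))).eventually_lt_const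
      (lt_add_of_pos_right 1 hε)).and self_mem_nhdsWithin).exists
  refine ⟨(1 + η⁻¹) ^ p, by positivity, fun s t hs ht => ?_⟩
  rcases le_total t (η * s) with h | h
  · calc (s + t) ^ p ≤ ((1 + η) * s) ^ p := by gcongr; linarith
      _ = (1 + η) ^ p * s ^ p := Real.mul_rpow (by positivity) hs
      _ ≤ (1 + ε) * s ^ p := by gcongr
      _ ≤ _ := le_add_of_nonneg_right (by positivity)
  · have hst : s ≤ η⁻¹ * t := (le_inv_mul_iff₀ hη).2 h
    calc (s + t) ^ p ≤ ((1 + η⁻¹) * t) ^ p := by gcongr; linarith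
      _ = (1 + η⁻¹) ^ p * t ^ p := Real.mul_rpow (by positivity) ht
      _ ≤ _ := le_add_of_nonneg_left (by positivity)

lemma exists_abs_norm_add_rpow_sub_le (G : Type*) [NormedAddCommGroup G] {p ε : ℝ} (hp : 0 < p)
    (hε : 0 < ε) :
    ∃ C, 0 ≤ C ∧ ∀ a b : G, |‖a + b‖ ^ p - ‖a‖ ^ p| ≤ ε * ‖a‖ ^ p + C * ‖b‖ ^ p := by
  obtain ⟨η, hη_le, hη⟩ : ∃ η : ℝ, η * (1 + η) ≤ ε ∧ 0 < η := by
    have hη : 0 < min 1 (ε / 2) := by positivity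
    exact ⟨_, by nlinarith [min_le_left 1 (ε / 2), min_le_right 1 (ε / 2)], hη⟩
  obtain ⟨C, hC, h⟩ := exists_add_rpow_le hp hη
  refine ⟨(1 + η) * C, by positivity, fun a b => ?_⟩
  have hupper : ‖a + b‖ ^ p ≤ (1 + η) * ‖a‖ ^ p + C * ‖b‖ ^ p :=
    (Real.rpow_le_rpow (norm_nonneg _) (norm_add_le a b) hp.le).trans
      (h _ _ (norm_nonneg _) (norm_nonneg _))
  have hlower : ‖a‖ ^ p ≤ (1 + η) * ‖a + b‖ ^ p + C * ‖b‖ ^ p := by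
    refine (Real.rpow_le_rpow (norm_nonneg _) ?_ hp.le).trans
      (h _ _ (norm_nonneg _) (norm_nonneg _))
    simpa using norm_sub_le (a + b) b
  have ha : 0 ≤ ‖a‖ ^ p := by positivity
  have hb : 0 ≤ C * ‖b‖ ^ p := by positivity
  rw [abs_le]
  constructor <;> nlinarith [mul_le_mul_of_nonneg_left hupper hη.le, mul_nonneg hη.le hb,
    mul_nonneg (mul_nonneg hη.le hη.le) ha, mul_le_mul_of_nonneg_right hη_le ha]

variable {α G : Type*} [MeasurableSpace α] {μ : Measure α} [NormedAddCommGroup G]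

lemma tendsto_integral_zero_of_abs_le_add {W d : ℕ → α → ℝ} {h : α → ℝ} {M : ℝ}
    (hW : ∀ n, Integrable (W n) μ) (hd : ∀ n, Integrable (d n) μ) (hd_nonneg : ∀ n x, 0 ≤ d n x)
    (hM : ∀ n, ∫ x, d n x ∂μ ≤ M) (hh : Integrable h μ)
    (hlim : ∀ᵐ x ∂μ, Tendsto (fun n => W n x) atTop (𝓝 0))
    (hbound : ∀ ε > 0, ∃ C, ∀ n x, |W n x| ≤ ε * d n x + C * h x) :
    Tendsto (fun n => ∫ x, W n x ∂μ) atTop (𝓝 0) := by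
  have hM_nonneg : 0 ≤ M := (integral_nonneg (hd_nonneg 0)).trans (hM 0)
  rw [tendsto_zero_iff_abs_tendsto_zero]
  refine tendsto_order.2
    ⟨fun _ hr => .of_forall fun n => hr.trans_le (abs_nonneg _), fun r hr => ?_⟩
  obtain ⟨ε, hε, hεM⟩ : ∃ ε > 0, ε * M < r :=
    ⟨r / (M + 1), by positivity, by rw [div_mul_eq_mul_div, div_lt_iff₀ (by positivity)]; linarith⟩
  obtain ⟨C, hC⟩ := hbound ε hε
  set excess : ℕ → α → ℝ := fun n x => max (|W n x| - ε * d n x) 0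
  have hexcess_int (n : ℕ) : Integrable (excess n) μ :=
    ((hW n).abs.sub ((hd n).const_mul ε)).pos_part
  have hexcess_lim : Tendsto (fun n => ∫ x, excess n x ∂μ) atTop (𝓝 0) := by
    rw [← integral_zero α ℝ (μ := μ)]
    refine tendsto_integral_of_dominated_convergence (fun x => |C * h x|)
      (fun n => (hexcess_int n).aestronglyMeasurable) (hh.const_mul C).abs
      (fun n => .of_forall fun x => ?_) ?_
    · rw [Real.norm_of_nonneg (le_max_right _ _)]
      exact max_le (by linarith [hC n x, le_abs_self (C * h x)]) (abs_nonneg _)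
    · filter_upwards [hlim] with x hx
      refine squeeze_zero (fun n => le_max_right _ _) (fun n => max_le ?_ (abs_nonneg _))
        (abs_zero (α := ℝ) ▸ hx.abs)
      linarith [mul_nonneg hε.le (hd_nonneg n x)]
  filter_upwards [hexcess_lim.eventually_lt_const (sub_pos.2 hεM)] with n hn
  calc |∫ x, W n x ∂μ| ≤ ∫ x, |W n x| ∂μ := abs_integral_le_integral_abs
    _ ≤ ∫ x, (excess n x + ε * d n x) ∂μ :=
        integral_mono (hW n).abs ((hexcess_int n).add ((hd n).const_mul ε)) fun x => by
          linarith [le_max_left (|W n x| - ε * d n x) 0]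
    _ = (∫ x, excess n x ∂μ) + ε * ∫ x, d n x ∂μ := by
        rw [integral_add (hexcess_int n) ((hd n).const_mul ε), integral_const_mul]
    _ < (r - ε * M) + ε * M :=
        add_lt_add_of_lt_of_le hn (mul_le_mul_of_nonneg_left (hM n) hε.le)
    _ = r := sub_add_cancel _ _

/-- The **Brezis–Lieb lemma**. -/
theorem tendsto_integral_norm_rpow_sub_integral_norm_sub_rpow {p : ℝ} (hp : 0 < p)
    {f : ℕ → α → G} {g : α → G} (hf : ∀ n, MemLp (f n) (ENNReal.ofReal p) μ)
    (hg : MemLp g (ENNReal.ofReal p) μ) {M : ℝ} (hM : ∀ n, ∫ x, ‖f n x - g x‖ ^ p ∂μ ≤ M)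
    (hlim : ∀ᵐ x ∂μ, Tendsto (fun n => f n x) atTop (𝓝 (g x))) :
    Tendsto (fun n => (∫ x, ‖f n x‖ ^ p ∂μ) - ∫ x, ‖f n x - g x‖ ^ p ∂μ) atTop
      (𝓝 (∫ x, ‖g x‖ ^ p ∂μ)) := by
  have hint {f : α → G} (hf : MemLp f (ENNReal.ofReal p) μ) :
      Integrable (fun x => ‖f x‖ ^ p) μ := by
    simpa [hp.le] using hf.integrable_norm_rpow (by simpa using hp) ENNReal.ofReal_ne_top
  have hdiff (n : ℕ) : Integrable (fun x => ‖f n x - g x‖ ^ p) μ := hint ((hf n).sub hg)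
  have hmain := tendsto_integral_zero_of_abs_le_add
    (W := fun n x => ‖f n x‖ ^ p - ‖f n x - g x‖ ^ p - ‖g x‖ ^ p)
    (fun n => ((hint (hf n)).sub (hdiff n)).sub (hint hg)) hdiff
    (fun n x => by positivity) hM (hint hg) ?_ fun ε hε => ?_
  · rw [← tendsto_sub_nhds_zero_iff]
    refine hmain.congr fun n => ?_
    rw [← integral_sub (hint (hf n)) (hdiff n)]
    exact integral_sub ((hint (hf n)).sub (hdiff n)) (hint hg)
  · filter_upwards [hlim] with x hx
    have hpow := (hx.norm.rpow_const (Or.inr hp.le)).sub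
      ((hx.sub_const (g x)).norm.rpow_const (p := p) (Or.inr hp.le))
    simpa [Real.zero_rpow hp.ne'] using hpow.sub_const (‖g x‖ ^ p)
  · obtain ⟨C, -, hC⟩ := exists_abs_norm_add_rpow_sub_le G hp hε
    refine ⟨C + 1, fun n x => ?_⟩
    have := hC (f n x - g x) (g x)
    rw [sub_add_cancel] at this
    have hgx : 0 ≤ ‖g x‖ ^ p := by positivity
    calc _ ≤ |‖f n x‖ ^ p - ‖f n x - g x‖ ^ p| + |‖g x‖ ^ p| := abs_sub _ _
      _ ≤ _ := by rw [abs_of_nonneg hgx]; linarith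

end BrezisLieb

section GradientIdentity

variable {E F : Type*} [NormedAddCommGroup E] [InnerProductSpace ℝ E] [FiniteDimensional ℝ E]
  [MeasurableSpace E] [BorelSpace E]
  [NormedAddCommGroup F] [InnerProductSpace ℂ F] [CompleteSpace F]

lemma integral_norm_sq_eq_norm_toLp_sq {α G : Type*} {mα : MeasurableSpace α} {μ : Measure α}
    [NormedAddCommGroup G] {f : α → G} (hf : MemLp f 2 μ) :
    ∫ x, ‖f x‖ ^ 2 ∂μ = ‖hf.toLp f‖ ^ 2 := by
  have : 0 ≤ ∫ x, ‖f x‖ ^ 2 ∂μ := integral_nonneg fun x => by positivity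
  rw [Lp.norm_toLp, hf.eLpNorm_eq_integral_rpow_norm two_ne_zero (by simp),
    ENNReal.toReal_ofReal (by positivity), ← Real.rpow_mul_natCast (by positivity)]
  simp

lemma norm_sq_eq_integral_fourier (f : L²(E, F)) :
    ‖f‖ ^ 2 = ∫ ξ, ‖(𝓕 f : L²(E, F)) ξ‖ ^ 2 := by
  rw [integral_norm_sq_eq_norm_toLp_sq (Lp.memLp _), Lp.toLp_coeFn, Lp.norm_fourier_eq]

theorem sum_norm_sq_eq_neg_re_inner {ι : Type*} [Fintype ι] (b : OrthonormalBasis ι ℝ E)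
    {f w : L²(E, F)} {g : ι → L²(E, F)}
    (hg : ∀ i, ∂_{b i} (f : 𝓢'(E, F)) = (g i : 𝓢'(E, F)))
    (hw : Δ (f : 𝓢'(E, F)) = (w : 𝓢'(E, F))) :
    ∑ i, ‖g i‖ ^ 2 = -(inner ℂ f w).re := by
  have hsum : ∑ i, ‖g i‖ ^ 2 = ∫ ξ, ∑ i, ‖(𝓕 (g i) : L²(E, F)) ξ‖ ^ 2 := by
    simp only [norm_sq_eq_integral_fourier]
    exact (integral_finsetSum _ fun i _ =>
      (Lp.memLp (𝓕 (g i) : L²(E, F))).integrable_norm_pow two_ne_zero).symm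
  have hinner : -(inner ℂ f w).re =
      ∫ ξ, -(inner ℂ ((𝓕 f : L²(E, F)) ξ) ((𝓕 w : L²(E, F)) ξ)).re := by
    rw [← Lp.inner_fourier_eq, L2.inner_def, integral_neg]
    exact congrArg Neg.neg (integral_re (𝕜 := ℂ) (L2.integrable_inner _ _)).symm
  rw [hsum, hinner]
  refine integral_congr_ae ?_
  filter_upwards [ae_all_iff.2 fun i => fourier_ae_eq_of_lineDerivOp_eq (hg i),
    fourier_ae_eq_of_laplacian_eq hw] with ξ hgξ hwξ
  have hw' : (inner ℂ ((𝓕 f : L²(E, F)) ξ) ((𝓕 w : L²(E, F)) ξ)).re =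
      -(2 * Real.pi * ‖ξ‖) ^ 2 * ‖(𝓕 f : L²(E, F)) ξ‖ ^ 2 := by
    rw [hwξ, inner_smul_right_eq_smul, Complex.smul_re, smul_eq_mul,
      norm_sq_eq_re_inner (𝕜 := ℂ) ((𝓕 f : L²(E, F)) ξ), RCLike.re_eq_complex_re]
  have hg' (i : ι) : ‖(𝓕 (g i) : L²(E, F)) ξ‖ ^ 2 =
      (2 * Real.pi) ^ 2 * ‖(𝓕 f : L²(E, F)) ξ‖ ^ 2 * ‖inner ℝ ξ (b i)‖ ^ 2 := by
    rw [hgξ, norm_smul, norm_mul, Complex.norm_real, mul_pow, mul_pow]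
    simp only [norm_mul, Complex.norm_ofNat, Complex.norm_real, Complex.norm_I, mul_one,
      Real.norm_of_nonneg Real.pi_pos.le]
    ring
  rw [hw', Finset.sum_congr rfl fun i _ => hg' i, ← Finset.mul_sum, b.sum_sq_norm_inner_left]
  ring

end GradientIdentity

section Sobolev

variable {N : ℕ}

variable {u u' v v' : Esp N → ℂ}

lemma toTemperedDistribution_sub {E F : Type*} [NormedAddCommGroup E] [InnerProductSpace ℝ E]
    [FiniteDimensional ℝ E] [MeasurableSpace E] [BorelSpace E]
    [NormedAddCommGroup F] [InnerProductSpace ℂ F] [CompleteSpace F] (f g : L²(E, F)) :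
    ((f - g : L²(E, F)) : 𝓢'(E, F)) = (f : 𝓢'(E, F)) - (g : 𝓢'(E, F)) :=
  map_sub (Lp.toTemperedDistributionCLM F volume 2) f g

lemma IsWeakPDeriv.sub {i : Fin N} (h : IsWeakPDeriv u i v) (h' : IsWeakPDeriv u' i v')
    (hu : MemLp u 2 volume) (hv : MemLp v 2 volume) (hu' : MemLp u' 2 volume)
    (hv' : MemLp v' 2 volume) : IsWeakPDeriv (u - u') i (v - v') := by
  rw [isWeakPDeriv_iff (hu.sub hu') (hv.sub hv'), MemLp.toLp_sub hu hu', MemLp.toLp_sub hv hv',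
    toTemperedDistribution_sub, toTemperedDistribution_sub, ← (isWeakPDeriv_iff hu hv).1 h,
    ← (isWeakPDeriv_iff hu' hv').1 h']
  exact map_sub (LineDeriv.lineDerivOpCLM ℂ 𝓢'(Esp N, ℂ) (EuclideanSpace.single i (1 : ℝ))) _ _

lemma IsWeakLap.sub (h : IsWeakLap u v) (h' : IsWeakLap u' v')
    (hu : MemLp u 2 volume) (hv : MemLp v 2 volume) (hu' : MemLp u' 2 volume)
    (hv' : MemLp v' 2 volume) : IsWeakLap (u - u') (v - v') := by
  rw [isWeakLap_iff (hu.sub hu') (hv.sub hv'), MemLp.toLp_sub hu hu', MemLp.toLp_sub hv hv',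
    toTemperedDistribution_sub, toTemperedDistribution_sub, ← (isWeakLap_iff hu hv).1 h,
    ← (isWeakLap_iff hu' hv').1 h']
  exact map_sub (LineDeriv.laplacianCLM ℝ (Esp N) 𝓢'(Esp N, ℂ)) _ _

lemma pderivC_comp_sub_right (i : Fin N) (φ : Esp N → ℂ) (y : Esp N) :
    pderivC i (fun x => φ (x - y)) = fun x => pderivC i φ (x - y) := by
  funext x
  rw [pderivC, fderiv_comp_sub, pderivC]

lemma TestFun.comp_sub_right {φ : Esp N → ℂ} (h : TestFun φ) (y : Esp N) :
    TestFun fun x => φ (x - y) :=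
  ⟨h.1.comp (contDiff_id.sub contDiff_const), h.2.comp_homeomorph (Homeomorph.subRight y)⟩

lemma isWeakPDeriv_schwartzMap (φ : 𝓢(Esp N, ℂ)) (i : Fin N) :
    IsWeakPDeriv φ i (∂_{EuclideanSpace.single i (1 : ℝ)} φ : 𝓢(Esp N, ℂ)) := fun ψ hψ => by
  have h := SchwartzMap.integral_mul_lineDerivOp_right_eq_neg_left (μ := volume) φ
    (hψ.2.toSchwartzMap hψ.1) (EuclideanSpace.single i (1 : ℝ))
  rwa [← pderivC_coe] at h

lemma isWeakLap_schwartzMap (φ : 𝓢(Esp N, ℂ)) :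
    IsWeakLap φ (Δ φ : 𝓢(Esp N, ℂ)) := fun ψ hψ => by
  have h := SchwartzMap.integral_mul_laplacian_right_eq_left (μ := volume) φ
    (hψ.2.toSchwartzMap hψ.1)
  rwa [← lapC_coe] at h

/-- A Schwartz function as an element of `H²`. -/
def H2.ofSchwartz (φ : 𝓢(Esp N, ℂ)) : H2 N where
  u := φ
  grad i := (∂_{EuclideanSpace.single i (1 : ℝ)} φ : 𝓢(Esp N, ℂ))
  lapl := (Δ φ : 𝓢(Esp N, ℂ))
  u_mem := φ.memLp 2
  grad_mem i := (∂_{EuclideanSpace.single i (1 : ℝ)} φ : 𝓢(Esp N, ℂ)).memLp 2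
  lapl_mem := (Δ φ : 𝓢(Esp N, ℂ)).memLp 2
  grad_spec := isWeakPDeriv_schwartzMap φ
  lapl_spec := isWeakLap_schwartzMap φ

namespace H2

/-- The class in `L²` of the underlying function. -/
def toL2 (U : H2 N) : L²(Esp N, ℂ) := U.u_mem.toLp U.u

/-- The class in `L²` of the `i`-th partial derivative. -/
def gradL2 (U : H2 N) (i : Fin N) : L²(Esp N, ℂ) := (U.grad_mem i).toLp (U.grad i)

/-- The class in `L²` of the Laplacian. -/
def laplL2 (U : H2 N) : L²(Esp N, ℂ) := U.lapl_mem.toLp U.lapl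

lemma coeFn_toL2 (U : H2 N) : U.toL2 =ᵐ[volume] U.u := U.u_mem.coeFn_toLp

lemma lineDerivOp_toL2 (U : H2 N) (i : Fin N) :
    ∂_{EuclideanSpace.single i (1 : ℝ)} (U.toL2 : 𝓢'(Esp N, ℂ)) = (U.gradL2 i : 𝓢'(Esp N, ℂ)) :=
  (isWeakPDeriv_iff U.u_mem (U.grad_mem i)).1 (U.grad_spec i)

lemma laplacian_toL2 (U : H2 N) : Δ (U.toL2 : 𝓢'(Esp N, ℂ)) = (U.laplL2 : 𝓢'(Esp N, ℂ)) :=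
  (isWeakLap_iff U.u_mem U.lapl_mem).1 U.lapl_spec

lemma massSq_eq (U : H2 N) : U.massSq = ‖U.toL2‖ ^ 2 :=
  integral_norm_sq_eq_norm_toLp_sq U.u_mem

lemma lapSq_eq (U : H2 N) : U.lapSq = ‖U.laplL2‖ ^ 2 :=
  integral_norm_sq_eq_norm_toLp_sq U.lapl_mem

lemma gradSq_eq (U : H2 N) : U.gradSq = ∑ i, ‖U.gradL2 i‖ ^ 2 :=
  Finset.sum_congr rfl fun i _ => integral_norm_sq_eq_norm_toLp_sq (U.grad_mem i)

lemma gradSq_eq_neg_re_inner (U : H2 N) : U.gradSq = -(inner ℂ U.toL2 U.laplL2).re := by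
  rw [gradSq_eq]
  exact sum_norm_sq_eq_neg_re_inner (EuclideanSpace.basisFun (Fin N) ℝ)
    (fun i => by rw [EuclideanSpace.basisFun_apply, U.lineDerivOp_toL2]) U.laplacian_toL2

instance : Sub (H2 N) where
  sub U V :=
    { u := U.u - V.u
      grad := U.grad - V.grad
      lapl := U.lapl - V.lapl
      u_mem := U.u_mem.sub V.u_mem
      grad_mem := fun i => (U.grad_mem i).sub (V.grad_mem i)
      lapl_mem := U.lapl_mem.sub V.lapl_mem
      grad_spec := fun i => (U.grad_spec i).sub (V.grad_spec i) U.u_mem (U.grad_mem i) V.u_mem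
        (V.grad_mem i)
      lapl_spec := U.lapl_spec.sub V.lapl_spec U.u_mem U.lapl_mem V.u_mem V.lapl_mem }

instance : SMul ℝ (H2 N) where
  smul a U :=
    { u := a • U.u
      grad := a • U.grad
      lapl := a • U.lapl
      u_mem := U.u_mem.const_smul a
      grad_mem := fun i => (U.grad_mem i).const_smul a
      lapl_mem := U.lapl_mem.const_smul a
      grad_spec := fun i φ hφ => by
        simp only [Pi.smul_apply, smul_mul_assoc, integral_smul, U.grad_spec i φ hφ, smul_neg]
      lapl_spec := fun φ hφ => by
        simp only [Pi.smul_apply, smul_mul_assoc, integral_smul, U.lapl_spec φ hφ] }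

@[simp] lemma toL2_sub (U V : H2 N) : (U - V).toL2 = U.toL2 - V.toL2 := rfl

@[simp] lemma gradL2_sub (U V : H2 N) (i : Fin N) :
    (U - V).gradL2 i = U.gradL2 i - V.gradL2 i := rfl

@[simp] lemma laplL2_sub (U V : H2 N) : (U - V).laplL2 = U.laplL2 - V.laplL2 := rfl

/-- The translate `x ↦ u (x + y)`. -/
def translate (U : H2 N) (y : Esp N) : H2 N where
  u x := U.u (x + y)
  grad i x := U.grad i (x + y)
  lapl x := U.lapl (x + y)
  u_mem := U.u_mem.comp_measurePreserving (measurePreserving_add_right volume y)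
  grad_mem i := (U.grad_mem i).comp_measurePreserving (measurePreserving_add_right volume y)
  lapl_mem := U.lapl_mem.comp_measurePreserving (measurePreserving_add_right volume y)
  grad_spec i φ hφ := by
    have h := U.grad_spec i _ (hφ.comp_sub_right y)
    rw [← integral_add_right_eq_self _ y,
      ← integral_add_right_eq_self (fun x => U.grad i x * _) y] at h
    simpa only [pderivC_comp_sub_right, add_sub_cancel_right] using h
  lapl_spec φ hφ := by
    have h := U.lapl_spec _ (hφ.comp_sub_right y)
    rw [← integral_add_right_eq_self _ y,
      ← integral_add_right_eq_self (fun x => U.lapl x * _) y] at h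
    simpa only [lapC, pderivC_comp_sub_right, add_sub_cancel_right] using h

lemma toL2_translate (U : H2 N) (y : Esp N) : (U.translate y).toL2 = translateL2 y U.toL2 := by
  refine Lp.ext ?_
  filter_upwards [(U.translate y).coeFn_toL2, translateL2_ae_eq y U.toL2,
    (measurePreserving_add_right volume y).quasiMeasurePreserving.ae U.coeFn_toL2]
    with x h₁ h₂ h₃
  exact h₁.trans (h₃.symm.trans h₂.symm)

lemma massSq_translate (U : H2 N) (y : Esp N) : (U.translate y).massSq = U.massSq :=
  integral_add_right_eq_self (fun x => ‖U.u x‖ ^ 2) y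

lemma gradSq_translate (U : H2 N) (y : Esp N) : (U.translate y).gradSq = U.gradSq :=
  Finset.sum_congr rfl fun i _ => integral_add_right_eq_self (fun x => ‖U.grad i x‖ ^ 2) y

lemma lapSq_translate (U : H2 N) (y : Esp N) : (U.translate y).lapSq = U.lapSq :=
  integral_add_right_eq_self (fun x => ‖U.lapl x‖ ^ 2) y

lemma h2NormSq_translate (U : H2 N) (y : Esp N) : (U.translate y).h2NormSq = U.h2NormSq := by
  rw [h2NormSq, massSq_translate, gradSq_translate, lapSq_translate, h2NormSq]

lemma Tfun_translate (U : H2 N) (y : Esp N) (c : ℝ) : Tfun c (U.translate y) = Tfun c U := by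
  rw [Tfun, massSq_translate, gradSq_translate, lapSq_translate, Tfun]

lemma pPow_translate (U : H2 N) (y : Esp N) (σ : ℝ) : (U.translate y).pPow σ = U.pPow σ :=
  integral_add_right_eq_self (fun x => ‖U.u x‖ ^ (2 * σ + 2)) y

lemma Tfun_smul (a c : ℝ) (U : H2 N) : Tfun c (a • U) = a ^ 2 * Tfun c U := by
  have hnorm (z : ℂ) : ‖a • z‖ ^ 2 = a ^ 2 * ‖z‖ ^ 2 := by
    rw [norm_smul, mul_pow, Real.norm_eq_abs, sq_abs]
  change (∫ x, ‖a • U.lapl x‖ ^ 2) - 2 * (∑ i, ∫ x, ‖a • U.grad i x‖ ^ 2) +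
    (1 + c) * (∫ x, ‖a • U.u x‖ ^ 2) = _
  simp only [hnorm, integral_const_mul, ← Finset.mul_sum, Tfun, lapSq, gradSq, massSq]
  ring

lemma pPow_smul (a σ : ℝ) (U : H2 N) : (a • U).pPow σ = |a| ^ (2 * σ + 2) * U.pPow σ := by
  change ∫ x, ‖a • U.u x‖ ^ (2 * σ + 2) = _
  simp only [norm_smul, Real.norm_eq_abs, Real.mul_rpow (abs_nonneg a) (norm_nonneg _),
    integral_const_mul, pPow]

lemma h2NormSq_eq (U : H2 N) :
    U.h2NormSq = ‖U.toL2‖ ^ 2 + ∑ i, ‖U.gradL2 i‖ ^ 2 + ‖U.laplL2‖ ^ 2 := by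
  rw [h2NormSq, massSq_eq, gradSq_eq, lapSq_eq]

lemma norm_toL2_sq_le (U : H2 N) : ‖U.toL2‖ ^ 2 ≤ U.h2NormSq := by
  rw [h2NormSq_eq, add_assoc]
  exact le_add_of_nonneg_right (by positivity)

lemma norm_gradL2_sq_le (U : H2 N) (i : Fin N) : ‖U.gradL2 i‖ ^ 2 ≤ U.h2NormSq := by
  rw [h2NormSq_eq]
  have := Finset.single_le_sum (f := fun i => ‖U.gradL2 i‖ ^ 2) (fun j _ => by positivity)
    (Finset.mem_univ i)
  linarith [sq_nonneg ‖U.toL2‖, sq_nonneg ‖U.laplL2‖]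

lemma norm_laplL2_sq_le (U : H2 N) : ‖U.laplL2‖ ^ 2 ≤ U.h2NormSq := by
  rw [h2NormSq_eq]
  exact le_add_of_nonneg_left (by positivity)

lemma h2NormSq_sub_le (U V : H2 N) : (U - V).h2NormSq ≤ 2 * (U.h2NormSq + V.h2NormSq) := by
  have hsub (f g : L²(Esp N, ℂ)) : ‖f - g‖ ^ 2 ≤ 2 * (‖f‖ ^ 2 + ‖g‖ ^ 2) :=
    (pow_le_pow_left₀ (norm_nonneg _) (norm_sub_le f g) 2).trans add_sq_le
  have hgrad := Finset.sum_le_sum fun i (_ : i ∈ Finset.univ) => hsub (U.gradL2 i) (V.gradL2 i)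
  rw [← Finset.mul_sum, Finset.sum_add_distrib] at hgrad
  simp only [h2NormSq_eq, toL2_sub, gradL2_sub, laplL2_sub]
  linarith [hsub U.toL2 V.toL2, hsub U.laplL2 V.laplL2]

theorem Tfun_eq (U : H2 N) (c : ℝ) :
    Tfun c U = ‖U.laplL2 + U.toL2‖ ^ 2 + c * ‖U.toL2‖ ^ 2 := by
  rw [Tfun, massSq_eq, lapSq_eq, gradSq_eq_neg_re_inner, norm_add_sq (𝕜 := ℂ), inner_re_symm,
    RCLike.re_eq_complex_re]
  ring

lemma Tfun_nonneg (U : H2 N) {c : ℝ} (hc : 0 ≤ c) : 0 ≤ Tfun c U := by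
  rw [Tfun_eq]
  positivity

theorem h2NormSq_le (U : H2 N) {c : ℝ} (hc : 0 < c) :
    U.h2NormSq ≤ (3 + 5 * c⁻¹) * Tfun c U := by
  have hmass : ‖U.toL2‖ ^ 2 ≤ c⁻¹ * Tfun c U := by
    rw [Tfun_eq, le_inv_mul_iff₀ hc]
    exact le_add_of_nonneg_left (by positivity)
  have hlap : ‖U.laplL2‖ ^ 2 ≤ 2 * Tfun c U + 2 * ‖U.toL2‖ ^ 2 := by
    have htri : ‖U.laplL2‖ ≤ ‖U.laplL2 + U.toL2‖ + ‖U.toL2‖ := by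
      simpa using norm_sub_le (U.laplL2 + U.toL2) U.toL2
    have hT : ‖U.laplL2 + U.toL2‖ ^ 2 ≤ Tfun c U := by
      rw [Tfun_eq]
      exact le_add_of_nonneg_right (by positivity)
    linarith [pow_le_pow_left₀ (norm_nonneg _) htri 2,
      add_sq_le (a := ‖U.laplL2 + U.toL2‖) (b := ‖U.toL2‖)]
  have hgrad : 2 * U.gradSq ≤ ‖U.toL2‖ ^ 2 + ‖U.laplL2‖ ^ 2 := by
    have hcs : U.gradSq ≤ ‖U.toL2‖ * ‖U.laplL2‖ := by
      rw [gradSq_eq_neg_re_inner]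
      exact (neg_le_abs _).trans ((Complex.abs_re_le_norm _).trans (norm_inner_le_norm _ _))
    linarith [two_mul_le_add_sq ‖U.toL2‖ ‖U.laplL2‖]
  have hT := U.Tfun_nonneg hc.le
  rw [h2NormSq, massSq_eq, lapSq_eq]
  have : 0 ≤ c⁻¹ * Tfun c U := by positivity
  linarith

end H2
end Sobolev

section WeakCompactness

variable {ι E : Type*} [NormedAddCommGroup E] [InnerProductSpace ℝ E] [FiniteDimensional ℝ E]
  [MeasurableSpace E] [BorelSpace E] {l : Filter ι} {f g : ι → L²(E, ℂ)} {f' g' : L²(E, ℂ)}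

lemma TendstoWeakly.tendsto_toTemperedDistribution_apply (h : TendstoWeakly ℂ f l f')
    (φ : 𝓢(E, ℂ)) :
    Tendsto (fun n => (f n : 𝓢'(E, ℂ)) φ) l (𝓝 ((f' : 𝓢'(E, ℂ)) φ)) :=
  h ((PointwiseConvergenceCLM.evalCLM (RingHom.id ℂ) ℂ φ).comp
    (Lp.toTemperedDistributionCLM ℂ volume 2))

lemma lineDerivOp_eq_of_tendstoWeakly [l.NeBot] {v : E} (hf : TendstoWeakly ℂ f l f')
    (hg : TendstoWeakly ℂ g l g') (h : ∀ n, ∂_{v} (f n : 𝓢'(E, ℂ)) = (g n : 𝓢'(E, ℂ))) :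
    ∂_{v} (f' : 𝓢'(E, ℂ)) = (g' : 𝓢'(E, ℂ)) := by
  ext φ
  rw [TemperedDistribution.lineDerivOp_apply_apply]
  refine tendsto_nhds_unique (hf.tendsto_toTemperedDistribution_apply _)
    ((hg.tendsto_toTemperedDistribution_apply φ).congr fun n => ?_)
  rw [← h, TemperedDistribution.lineDerivOp_apply_apply]

lemma laplacian_eq_of_tendstoWeakly [l.NeBot] (hf : TendstoWeakly ℂ f l f')
    (hg : TendstoWeakly ℂ g l g') (h : ∀ n, Δ (f n : 𝓢'(E, ℂ)) = (g n : 𝓢'(E, ℂ))) :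
    Δ (f' : 𝓢'(E, ℂ)) = (g' : 𝓢'(E, ℂ)) := by
  ext φ
  rw [TemperedDistribution.laplacian_apply_apply]
  refine tendsto_nhds_unique (hf.tendsto_toTemperedDistribution_apply _)
    ((hg.tendsto_toTemperedDistribution_apply φ).congr fun n => ?_)
  rw [← h, TemperedDistribution.laplacian_apply_apply]

variable {N : ℕ}

theorem H2.exists_subseq_tendstoWeakly {v : ℕ → H2 N} {R : ℝ} (hR : ∀ n, (v n).h2NormSq ≤ R) :
    ∃ φ : ℕ → ℕ, StrictMono φ ∧ ∃ V : H2 N,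
      TendstoWeakly ℂ (fun n => (v (φ n)).toL2) atTop V.toL2 ∧
      TendstoWeakly ℂ (fun n => (v (φ n)).laplL2) atTop V.laplL2 := by
  have : Fact ((2 : ℝ≥0∞) ≠ ∞) := ⟨ENNReal.ofNat_ne_top⟩
  let comp : Option (Option (Fin N)) → ℕ → L²(Esp N, ℂ) := fun i n =>
    i.elim (v n).toL2 fun j => j.elim (v n).laplL2 (v n).gradL2
  have hcomp (i) (n : ℕ) : ‖comp i n‖ ≤ √R := by
    refine Real.le_sqrt_of_sq_le (le_trans ?_ (hR n))
    rcases i with _ | _ | i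
    · exact (v n).norm_toL2_sq_le
    · exact (v n).norm_laplL2_sq_le
    · exact (v n).norm_gradL2_sq_le i
  obtain ⟨φ, hφ, lim, hlim⟩ := exists_forall_tendstoWeakly_of_norm_le (𝕜 := ℂ) hcomp
  have hu : TendstoWeakly ℂ (fun n => (v (φ n)).toL2) atTop (lim none) := hlim none
  have hw : TendstoWeakly ℂ (fun n => (v (φ n)).laplL2) atTop (lim (some none)) :=
    hlim (some none)
  have hg (i : Fin N) : TendstoWeakly ℂ (fun n => (v (φ n)).gradL2 i) atTop
    (lim (some (some i))) := hlim (some (some i))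
  let V : H2 N :=
    { u := lim none
      grad := fun i => lim (some (some i))
      lapl := lim (some none)
      u_mem := Lp.memLp _
      grad_mem := fun _ => Lp.memLp _
      lapl_mem := Lp.memLp _
      grad_spec := fun i => (isWeakPDeriv_iff (Lp.memLp _) (Lp.memLp _)).2 <| by
        simpa only [Lp.toLp_coeFn] using
          lineDerivOp_eq_of_tendstoWeakly hu (hg i) fun n => (v (φ n)).lineDerivOp_toL2 i
      lapl_spec := (isWeakLap_iff (Lp.memLp _) (Lp.memLp _)).2 <| by
        simpa only [Lp.toLp_coeFn] using
          laplacian_eq_of_tendstoWeakly hu hw fun n => (v (φ n)).laplacian_toL2 }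
  refine ⟨φ, hφ, V, ?_, ?_⟩
  · rwa [show V.toL2 = lim none from Lp.toLp_coeFn _ _]
  · rwa [show V.laplL2 = lim (some none) from Lp.toLp_coeFn _ _]

theorem H2.tendsto_Tfun_sub_Tfun_sub {v : ι → H2 N} {V : H2 N}
    (hu : TendstoWeakly ℂ (fun n => (v n).toL2) l V.toL2)
    (hw : TendstoWeakly ℂ (fun n => (v n).laplL2) l V.laplL2) (c : ℝ) :
    Tendsto (fun n => Tfun c (v n) - Tfun c (v n - V)) l (𝓝 (Tfun c V)) := by
  rw [H2.Tfun_eq]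
  refine ((hw.add hu).norm_sq_sub_norm_sub_sq.add
    (hu.norm_sq_sub_norm_sub_sq.const_mul c)).congr fun n => ?_
  rw [H2.Tfun_eq, H2.Tfun_eq, H2.toL2_sub, H2.laplL2_sub, add_sub_add_comm]
  ring

end WeakCompactness

section SobolevEmbedding

namespace H2

variable {N : ℕ} {p σ c : ℝ}

theorem exists_eLpNorm_le_mul_sqrt_h2NormSq (hp : 2 ≤ p) (hsub : N * (1 / 2 - 1 / p) < 2) :
    ∃ C : NNReal, ∀ U : H2 N,
      eLpNorm U.u (ENNReal.ofReal p) volume ≤ C * ENNReal.ofReal √U.h2NormSq := by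
  have hshell : ∑' k, shellConst (Esp N) p k ≠ ∞ :=
    tsum_shellConst_ne_top hp (by rwa [finrank_euclideanSpace_fin])
  have hball : volume (Metric.ball (0 : Esp N) 1) ^ (1 / 2 - 1 / p) ≠ ∞ :=
    ENNReal.rpow_ne_top_of_nonneg (sub_nonneg.2 (one_div_le_one_div_of_le two_pos hp))
      measure_ball_lt_top.ne
  refine ⟨(∑' k, shellConst (Esp N) p k).toNNReal +
    (volume (Metric.ball (0 : Esp N) 1) ^ (1 / 2 - 1 / p)).toNNReal, fun U => ?_⟩
  rw [ENNReal.coe_add, ENNReal.coe_toNNReal hshell, ENNReal.coe_toNNReal hball, add_mul,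
    ← eLpNorm_congr_ae U.coeFn_toL2]
  refine (eLpNorm_le_of_laplacian_eq U.laplacian_toL2 hp).trans ?_
  rw [← ofReal_norm, ← ofReal_norm]
  gcongr
  · exact Real.le_sqrt_of_sq_le U.norm_laplL2_sq_le
  · exact Real.le_sqrt_of_sq_le U.norm_toL2_sq_le

lemma memLp_of_subcritical (U : H2 N) (hp : 2 ≤ p) (hsub : N * (1 / 2 - 1 / p) < 2) :
    MemLp U.u (ENNReal.ofReal p) volume := by
  obtain ⟨C, hC⟩ := exists_eLpNorm_le_mul_sqrt_h2NormSq (N := N) hp hsub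
  exact ⟨U.u_mem.aestronglyMeasurable,
    (hC U).trans_lt (ENNReal.mul_lt_top ENNReal.coe_lt_top ENNReal.ofReal_lt_top)⟩

lemma pPow_nonneg (U : H2 N) (σ : ℝ) : 0 ≤ U.pPow σ :=
  integral_nonneg fun _ => by positivity

lemma eLpNorm_eq_ofReal_pPow_rpow (U : H2 N) (hσ : 0 ≤ σ)
    (hsub : N * (1 / 2 - 1 / (2 * σ + 2)) < 2) :
    eLpNorm U.u (ENNReal.ofReal (2 * σ + 2)) volume =
      ENNReal.ofReal (U.pPow σ ^ (2 * σ + 2)⁻¹) := by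
  have h := (U.memLp_of_subcritical (by linarith) hsub).eLpNorm_eq_integral_rpow_norm
    (by simp; linarith) ENNReal.ofReal_ne_top
  rwa [ENNReal.toReal_ofReal (by linarith)] at h

lemma pPow_pos {U : H2 N} (hU : U.toL2 ≠ 0) (hσ : 0 ≤ σ)
    (hsub : N * (1 / 2 - 1 / (2 * σ + 2)) < 2) : 0 < U.pPow σ := by
  refine (U.pPow_nonneg σ).lt_of_ne' fun h0 => hU ?_
  have h := U.eLpNorm_eq_ofReal_pPow_rpow hσ hsub
  rw [h0, Real.zero_rpow (by positivity), ENNReal.ofReal_zero,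
    eLpNorm_eq_zero_iff U.u_mem.aestronglyMeasurable (by simp; linarith)] at h
  exact Lp.eq_zero_iff_ae_eq_zero.2 (U.coeFn_toL2.trans h)

lemma sq_pPow_rpow_inv (U : H2 N) (σ : ℝ) :
    (U.pPow σ ^ (2 * σ + 2)⁻¹) ^ 2 = U.pPow σ ^ (σ + 1)⁻¹ := by
  rw [← Real.rpow_mul_natCast (U.pPow_nonneg σ), show 2 * σ + 2 = 2 * (σ + 1) by ring, mul_inv,
    Nat.cast_ofNat, mul_right_comm, inv_mul_cancel₀ two_ne_zero, one_mul]

theorem exists_pPow_rpow_le_mul_h2NormSq (hσ : 0 ≤ σ)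
    (hsub : N * (1 / 2 - 1 / (2 * σ + 2)) < 2) :
    ∃ C > 0, ∀ U : H2 N, U.pPow σ ^ (σ + 1)⁻¹ ≤ C * U.h2NormSq := by
  obtain ⟨C, hC⟩ := exists_eLpNorm_le_mul_sqrt_h2NormSq (N := N) (p := 2 * σ + 2) (by linarith) hsub
  refine ⟨C ^ 2 + 1, by positivity, fun U => ?_⟩
  have hH : 0 ≤ U.h2NormSq := (sq_nonneg _).trans U.norm_toL2_sq_le
  have hnorm : U.pPow σ ^ (2 * σ + 2)⁻¹ ≤ C * √U.h2NormSq := by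
    have h := hC U
    rwa [U.eLpNorm_eq_ofReal_pPow_rpow hσ hsub, ← ENNReal.ofReal_coe_nnreal,
      ← ENNReal.ofReal_mul C.coe_nonneg, ENNReal.ofReal_le_ofReal_iff (by positivity)] at h
  calc U.pPow σ ^ (σ + 1)⁻¹ = (U.pPow σ ^ (2 * σ + 2)⁻¹) ^ 2 := (U.sq_pPow_rpow_inv σ).symm
    _ ≤ (C * √U.h2NormSq) ^ 2 :=
      pow_le_pow_left₀ (Real.rpow_nonneg (U.pPow_nonneg σ) _) hnorm 2
    _ = C ^ 2 * U.h2NormSq := by rw [mul_pow, Real.sq_sqrt hH]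
    _ ≤ (C ^ 2 + 1) * U.h2NormSq := by linarith

variable (N) in
lemma exists_toL2_ne_zero : ∃ U : H2 N, U.toL2 ≠ 0 := by
  let χ : ContDiffBump (0 : Esp N) := default
  have hχ : ContDiff ℝ (⊤ : ℕ∞) (fun x => (χ x : ℂ)) := Complex.ofRealCLM.contDiff.comp χ.contDiff
  let U := ofSchwartz ((χ.hasCompactSupport.comp_left Complex.ofReal_zero).toSchwartzMap hχ)
  refine ⟨U, fun h => (Metric.measure_ball_pos volume (0 : Esp N) χ.rIn_pos).ne' ?_⟩
  have hU : U.u =ᵐ[volume] 0 := U.coeFn_toL2.symm.trans (Lp.eq_zero_iff_ae_eq_zero.1 h)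
  refine measure_eq_zero_iff_ae_notMem.2 (hU.mono fun x hx0 hx => ?_)
  have h1 : χ x = 1 := χ.one_of_mem_closedBall (Metric.ball_subset_closedBall hx)
  exact one_ne_zero (h1.symm.trans (Complex.ofReal_eq_zero.1 hx0))

end H2

end SobolevEmbedding

section Infimum

variable {N : ℕ} {σ c : ℝ}

lemma bddBelow_Tfun (N : ℕ) (σ : ℝ) (hc : 0 ≤ c) :
    BddBelow {r : ℝ | ∃ U : H2 N, U.pPow σ = 1 ∧ r = Tfun c U} :=
  ⟨0, fun _ ⟨U, _, h⟩ => h ▸ U.Tfun_nonneg hc⟩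

lemma H2.pPow_normalize {U : H2 N} (hσ : σ ≠ -1) (hU : 0 < U.pPow σ) :
    (U.pPow σ ^ (-(2 * σ + 2)⁻¹) • U).pPow σ = 1 := by
  have hexp : 2 * σ + 2 ≠ 0 := fun h => hσ (by linarith)
  rw [H2.pPow_smul, abs_of_nonneg (by positivity), ← Real.rpow_mul hU.le, neg_mul,
    inv_mul_cancel₀ hexp, Real.rpow_neg_one, inv_mul_cancel₀ hU.ne']

lemma nonempty_Tfun (c : ℝ) (hσ : 0 ≤ σ) (hsub : N * (1 / 2 - 1 / (2 * σ + 2)) < 2) :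
    {r : ℝ | ∃ U : H2 N, U.pPow σ = 1 ∧ r = Tfun c U}.Nonempty := by
  obtain ⟨U, hU⟩ := H2.exists_toL2_ne_zero N
  exact ⟨_, _, H2.pPow_normalize (by linarith) (H2.pPow_pos hU hσ hsub), rfl⟩

theorem tmin_pos (hσ : 0 ≤ σ) (hsub : N * (1 / 2 - 1 / (2 * σ + 2)) < 2) (hc : 0 < c) :
    0 < tmin N σ c := by
  obtain ⟨C, hC, hCU⟩ := H2.exists_pPow_rpow_le_mul_h2NormSq (N := N) hσ hsub
  have hpos : 0 < C * (3 + 5 * c⁻¹) := by positivity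
  refine (inv_pos.2 hpos).trans_le (le_csInf (nonempty_Tfun c hσ hsub) ?_)
  rintro r ⟨U, hU, rfl⟩
  rw [inv_le_iff_one_le_mul₀' hpos]
  calc 1 = U.pPow σ ^ (σ + 1)⁻¹ := by rw [hU, Real.one_rpow]
    _ ≤ C * U.h2NormSq := hCU U
    _ ≤ C * ((3 + 5 * c⁻¹) * Tfun c U) := by gcongr; exact U.h2NormSq_le hc
    _ = C * (3 + 5 * c⁻¹) * Tfun c U := (mul_assoc _ _ _).symm

theorem tmin_mul_pPow_rpow_le (hσ : σ ≠ -1) (hc : 0 ≤ c) (U : H2 N) :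
    tmin N σ c * U.pPow σ ^ (σ + 1)⁻¹ ≤ Tfun c U := by
  obtain h0 | hpos := (U.pPow_nonneg σ).eq_or_lt
  · have hexp : (σ + 1)⁻¹ ≠ 0 := inv_ne_zero fun h => hσ (by linarith)
    rw [← h0, Real.zero_rpow hexp, mul_zero]
    exact U.Tfun_nonneg hc
  · have h : tmin N σ c ≤ _ :=
      csInf_le (bddBelow_Tfun N σ hc) ⟨_, H2.pPow_normalize hσ hpos, rfl⟩
    rwa [H2.Tfun_smul, Real.rpow_neg hpos.le, inv_pow, H2.sq_pPow_rpow_inv,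
      le_inv_mul_iff₀ (by positivity), mul_comm] at h

end Infimum

section Compactness

variable {N : ℕ} {σ c : ℝ}

lemma one_lt_rpow_add_one_sub_rpow {a θ : ℝ} (ha0 : 0 < a) (ha1 : a < 1) (hθ : θ < 1) :
    1 < a ^ θ + (1 - a) ^ θ := by
  have hlt {b : ℝ} (hb0 : 0 < b) (hb1 : b < 1) : b < b ^ θ := by
    simpa only [Real.rpow_one] using Real.rpow_lt_rpow_of_exponent_gt hb0 hb1 hθ
  linarith [hlt ha0 ha1, hlt (sub_pos.2 ha1) (sub_lt_self 1 ha0)]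

theorem H2.exists_translate_subseq_tendstoWeakly (hσ : 0 < σ)
    (hsub : N * (1 / 2 - 1 / (2 * σ + 2)) < 2) {u : ℕ → H2 N} {R ε : ℝ}
    (hR : ∀ n, (u n).h2NormSq ≤ R) (hε : 0 < ε) (hP : ∀ᶠ n in atTop, ε ≤ (u n).pPow σ) :
    ∃ (y : ℕ → Esp N) (φ : ℕ → ℕ) (V : H2 N), StrictMono φ ∧ V.toL2 ≠ 0 ∧
      TendstoWeakly ℂ (fun n => ((u (φ n)).translate (y (φ n))).toL2) atTop V.toL2 ∧
      TendstoWeakly ℂ (fun n => ((u (φ n)).translate (y (φ n))).laplL2) atTop V.laplL2 := by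
  obtain ⟨K, δ, hδ, hK⟩ := exists_le_norm_lowPass (E := Esp N) (F := ℂ) (p := 2 * σ + 2)
    (by linarith) (by rwa [finrank_euclideanSpace_fin]) √R
    (ENNReal.ofReal_pos.2 (Real.rpow_pos_of_pos hε (2 * σ + 2)⁻¹)).ne'
  have hlow (n : ℕ) (hn : ε ≤ (u n).pPow σ) : ∃ y, δ ≤ ‖lowPass K (u n).toL2 y‖ := by
    refine hK _ _ (u n).laplacian_toL2
      (Real.le_sqrt_of_sq_le ((u n).norm_toL2_sq_le.trans (hR n)))
      (Real.le_sqrt_of_sq_le ((u n).norm_laplL2_sq_le.trans (hR n))) ?_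
    rw [eLpNorm_congr_ae (u n).coeFn_toL2, (u n).eLpNorm_eq_ofReal_pPow_rpow hσ.le hsub]
    gcongr
  choose! y hy using hlow
  obtain ⟨φ, hφ, V, hV, hV'⟩ := H2.exists_subseq_tendstoWeakly
    (v := fun n => (u n).translate (y n)) (R := R) fun n => by rw [h2NormSq_translate]; exact hR n
  refine ⟨y, φ, V, hφ, fun hV0 => ?_, hV, hV'⟩
  have hlim := (hV.tendsto_lowPass K 0).norm
  rw [hV0, lowPass_zero, norm_zero] at hlim
  refine hδ.not_ge (ge_of_tendsto hlim ((hφ.tendsto_atTop.eventually hP).mono fun n hn => ?_))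
  rw [toL2_translate, lowPass, bandLimit_translateL2 measurableSet_ball, zero_add]
  exact hy _ hn

theorem H2.exists_subseq_tendsto_pPow_sub_pPow_sub (hσ : 0 ≤ σ)
    (hsub : N * (1 / 2 - 1 / (2 * σ + 2)) < 2) {v : ℕ → H2 N} {V : H2 N} {R : ℝ}
    (hR : ∀ n, (v n).h2NormSq ≤ R) (hu : TendstoWeakly ℂ (fun n => (v n).toL2) atTop V.toL2) :
    ∃ φ : ℕ → ℕ, StrictMono φ ∧
      Tendsto (fun n => (v (φ n)).pPow σ - (v (φ n) - V).pPow σ) atTop (𝓝 (V.pPow σ)) := by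
  have hR' (n : ℕ) : (v n - V).h2NormSq ≤ 2 * (R + V.h2NormSq) :=
    (h2NormSq_sub_le _ _).trans (by gcongr; exact hR n)
  have hweak : TendstoWeakly ℂ (fun n => (v n - V).toL2) atTop 0 := by
    simpa only [toL2_sub, sub_self] using hu.sub_const V.toL2
  obtain ⟨φ, hφ, hae⟩ := hweak.exists_subseq_tendsto_ae (fun n => (v n - V).laplacian_toL2)
    (fun n => Real.le_sqrt_of_sq_le ((v n - V).norm_toL2_sq_le.trans (hR' n)))
    (fun n => Real.le_sqrt_of_sq_le ((v n - V).norm_laplL2_sq_le.trans (hR' n)))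
  obtain ⟨C, hC, hCU⟩ := exists_pPow_rpow_le_mul_h2NormSq (N := N) hσ hsub
  refine ⟨φ, hφ, tendsto_integral_norm_rpow_sub_integral_norm_sub_rpow (by linarith)
    (fun n => (v (φ n)).memLp_of_subcritical (by linarith) hsub)
    (V.memLp_of_subcritical (by linarith) hsub)
    (M := (C * (2 * (R + V.h2NormSq))) ^ (σ + 1)) (fun n => ?_) ?_⟩
  · change (v (φ n) - V).pPow σ ≤ _
    rw [← Real.rpow_inv_le_iff_of_pos (pPow_nonneg _ _) _ (by positivity)]
    · exact (hCU _).trans (by gcongr; exact hR' _)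
    · exact mul_nonneg hC.le (((sq_nonneg _).trans (norm_toL2_sq_le _)).trans (hR' n))
  · filter_upwards [hae, ae_all_iff.2 fun n => (v (φ n) - V).coeFn_toL2] with x hx hcoe
    exact tendsto_sub_nhds_zero_iff.1 (hx.congr hcoe)

theorem H2.pPow_eq_one_and_Tfun_eq_tmin {ι : Type*} {l : Filter ι} [l.NeBot] (hσ : 0 < σ)
    (hc : 0 ≤ c) (ht : 0 < tmin N σ c) {W : ι → H2 N} {V : H2 N} (hV : 0 < V.pPow σ)
    (hP : Tendsto (fun n => (W n).pPow σ) l (𝓝 (1 - V.pPow σ)))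
    (hT : Tendsto (fun n => Tfun c (W n)) l (𝓝 (tmin N σ c - Tfun c V))) :
    V.pPow σ = 1 ∧ Tfun c V = tmin N σ c := by
  have hθ0 : 0 < (σ + 1)⁻¹ := by positivity
  have hθ1 : (σ + 1)⁻¹ < 1 := inv_lt_one_of_one_lt₀ (by linarith)
  have hVle : tmin N σ c * V.pPow σ ^ (σ + 1)⁻¹ ≤ Tfun c V :=
    tmin_mul_pPow_rpow_le (by linarith) hc V
  have hWle : tmin N σ c * (1 - V.pPow σ) ^ (σ + 1)⁻¹ ≤ tmin N σ c - Tfun c V :=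
    le_of_tendsto_of_tendsto' ((hP.rpow_const (Or.inr hθ0.le)).const_mul _) hT fun n =>
      tmin_mul_pPow_rpow_le (by linarith) hc (W n)
  have hP1 : V.pPow σ = 1 := by
    by_contra hne
    have hle : V.pPow σ ≤ 1 := sub_nonneg.1 (ge_of_tendsto' hP fun n => (W n).pPow_nonneg σ)
    have hsum := one_lt_rpow_add_one_sub_rpow hV (hle.lt_of_ne hne) hθ1
    linarith [lt_mul_of_one_lt_right ht hsum]
  refine ⟨hP1, le_antisymm ?_ ?_⟩
  · exact sub_nonneg.1 (ge_of_tendsto' hT fun n => (W n).Tfun_nonneg hc)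
  · rwa [hP1, Real.one_rpow, mul_one] at hVle

theorem h2TendstoTrans_of_tendsto_h2NormSq {v : ℕ → H2 N} {xs : ℕ → Esp N} {U : H2 N}
    (h : Tendsto (fun k => ((v k).translate (xs k) - U).h2NormSq) atTop (𝓝 0)) :
    H2TendstoTrans v xs U := by
  have hsqrt := ENNReal.tendsto_ofReal h.sqrt
  rw [Real.sqrt_zero, ENNReal.ofReal_zero] at hsqrt
  let W (k : ℕ) : H2 N := (v k).translate (xs k) - U
  have hlim {f : ℕ → L²(Esp N, ℂ)} (hle : ∀ k, ‖f k‖ ^ 2 ≤ (W k).h2NormSq) :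
      Tendsto (fun k => ‖f k‖ₑ) atTop (𝓝 0) := by
    refine tendsto_nhds_bot_mono' hsqrt fun k => ?_
    rw [← ofReal_norm]
    exact ENNReal.ofReal_le_ofReal (Real.le_sqrt_of_sq_le (hle k))
  exact ⟨(hlim fun k => (W k).norm_toL2_sq_le).congr fun k => Lp.enorm_toLp (W k).u_mem,
    fun i => (hlim fun k => (W k).norm_gradL2_sq_le i).congr fun k =>
      Lp.enorm_toLp ((W k).grad_mem i),
    (hlim fun k => (W k).norm_laplL2_sq_le).congr fun k => Lp.enorm_toLp (W k).lapl_mem⟩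

theorem exists_minimizer_h2TendstoTrans (hσ : 0 < σ) (hsub : N * (1 / 2 - 1 / (2 * σ + 2)) < 2)
    (hc : 0 < c) {u : ℕ → H2 N} (hP : Tendsto (fun n => (u n).pPow σ) atTop (𝓝 1))
    (hT : Tendsto (fun n => Tfun c (u n)) atTop (𝓝 (tmin N σ c))) :
    ∃ (ψ : ℕ → ℕ) (xs : ℕ → Esp N) (U : H2 N), StrictMono ψ ∧ U.pPow σ = 1 ∧
      Tfun c U = tmin N σ c ∧ H2TendstoTrans (fun k => u (ψ k)) xs U := by
  obtain ⟨B, hB⟩ := hT.bddAbove_range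
  have hR (n : ℕ) : (u n).h2NormSq ≤ (3 + 5 * c⁻¹) * B :=
    ((u n).h2NormSq_le hc).trans (by gcongr; exact hB ⟨n, rfl⟩)
  obtain ⟨y, φ₁, V, hφ₁, hV0, hweak, hweak'⟩ := H2.exists_translate_subseq_tendstoWeakly hσ hsub hR
    one_half_pos (hP.eventually_const_le one_half_lt_one)
  obtain ⟨φ₂, hφ₂, hBL⟩ := H2.exists_subseq_tendsto_pPow_sub_pPow_sub hσ.le hsub
    (fun n => ((u (φ₁ n)).h2NormSq_translate (y (φ₁ n))).trans_le (hR _)) hweak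
  have hφ : StrictMono (φ₁ ∘ φ₂) := hφ₁.comp hφ₂
  have hPW := (hP.comp hφ.tendsto_atTop).sub hBL
  have hTW := (hT.comp hφ.tendsto_atTop).sub
    ((H2.tendsto_Tfun_sub_Tfun_sub hweak hweak' c).comp hφ₂.tendsto_atTop)
  simp only [Function.comp_def, H2.pPow_translate, H2.Tfun_translate, sub_sub_cancel] at hPW hTW
  obtain ⟨hP1, hTV⟩ := H2.pPow_eq_one_and_Tfun_eq_tmin hσ hc.le (tmin_pos hσ.le hsub hc)
    (H2.pPow_pos hV0 hσ.le hsub) hPW hTW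
  refine ⟨fun n => φ₁ (φ₂ n), fun n => y (φ₁ (φ₂ n)), V, hφ, hP1, hTV,
    h2TendstoTrans_of_tendsto_h2NormSq ?_⟩
  rw [hTV, sub_self] at hTW
  refine squeeze_zero (fun n => (sq_nonneg _).trans (H2.norm_toL2_sq_le _))
    (fun n => H2.h2NormSq_le _ hc) ?_
  simpa only [mul_zero] using hTW.const_mul (3 + 5 * c⁻¹)

lemma mul_half_sub_inv_lt_two
    (hσ : (N ≤ 4 ∧ 0 < σ) ∨ (5 ≤ N ∧ 0 < σ ∧ σ < 4 / ((N : ℝ) - 4))) :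
    N * (1 / 2 - 1 / (2 * σ + 2)) < 2 := by
  have hσ0 : 0 < σ := hσ.elim And.right fun h => h.2.1
  have hsub : (N - 4) * σ < 4 := by
    obtain ⟨hN, -⟩ | ⟨hN, -, hlt⟩ := hσ
    · have : (N : ℝ) ≤ 4 := mod_cast hN
      nlinarith
    · have : (5 : ℝ) ≤ N := mod_cast hN
      rwa [lt_div_iff₀' (by linarith)] at hlt
  have hrw : N * (1 / 2 - 1 / (2 * σ + 2)) = N * σ / (2 * σ + 2) := by
    field_simp
    ring
  rw [hrw, div_lt_iff₀ (by positivity)]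
  linarith

end Compactness

/-- For energy-subcritical `σ` and any `c > 0`, `t(c) > 0`, the
minimization problem `(T_c)` has a solution, and every minimizing sequence is precompact
in `H²` modulo translations. -/
theorem stmt11 (N : ℕ) (σ : ℝ) (hN : 1 ≤ N)
    (hσ : ((N ≤ 4 ∧ 0 < σ) ∨ (5 ≤ N ∧ 0 < σ ∧ σ < 4 / ((N : ℝ) - 4))))
    (c : ℝ) (hc : 0 < c) :
    0 < tmin N σ c ∧
    (∃ U : H2 N, U.pPow σ = 1 ∧ Tfun c U = tmin N σ c) ∧
    (∀ u : ℕ → H2 N,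
      Tendsto (fun n => (u n).pPow σ) atTop (nhds 1) →
      Tendsto (fun n => Tfun c (u n)) atTop (nhds (tmin N σ c)) →
      ∃ (ψ : ℕ → ℕ) (xs : ℕ → Esp N) (U : H2 N), StrictMono ψ ∧
        U.pPow σ = 1 ∧ Tfun c U = tmin N σ c ∧
        H2TendstoTrans (fun k => u (ψ k)) xs U) := by
  have hσ0 : 0 < σ := hσ.elim And.right fun h => h.2.1
  have hsub := mul_half_sub_inv_lt_two hσ
  refine ⟨tmin_pos hσ0.le hsub hc, ?_, fun u => exists_minimizer_h2TendstoTrans hσ0 hsub hc⟩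
  obtain ⟨r, -, hr, hmem⟩ := exists_seq_tendsto_sInf (nonempty_Tfun (N := N) c hσ0.le hsub)
    (bddBelow_Tfun N σ hc.le)
  choose u hu hru using hmem
  obtain ⟨-, -, U, -, hU, hUmin, -⟩ := exists_minimizer_h2TendstoTrans hσ0 hsub hc
    (tendsto_const_nhds.congr fun n => (hu n).symm) (hr.congr hru)
  exact ⟨U, hU, hUmin⟩

end
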